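/- arXiv:math/0107044 — 4 statements merged into one kernel-verified Lean document; each statement's English description precedes it below -/
import Mathlib

section
/- The number of permutations of [n] avoiding the generalized pattern 2-13 equals the n-th Catalan number C_n = (1/(n+1))·binom(2n, n). -/
def contains213 {n : ℕ} (π : Equiv.Perm (Fin n)) : Prop :=
  ∃ i j : ℕ, ∃ (_ : i < j) (hj : j + 1 < n),
    π ⟨j, by omega⟩ < π ⟨i, by omega⟩ ∧ π ⟨i, by omega⟩ < π ⟨j + 1, hj⟩

/-- classical 213-avoidance for lists -/
def Av213 : List ℕ → Prop
  | [] => True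
  | a :: t => t.Pairwise (fun x y => ¬ (x < a ∧ a < y)) ∧ Av213 t

/-- the list is an arrangement of `o, …, o+n-1` -/
def Arr213 (o n : ℕ) (l : List ℕ) : Prop :=
  l.Nodup ∧ ∀ x, x ∈ l ↔ o ≤ x ∧ x < o + n

/-- the preorder word of a binary tree -/
def word213 : ℕ → BinaryTree Unit → List ℕ
  | _, .nil => []
  | o, .node _ l r =>
    (o + l.numNodes) :: (word213 (o + l.numNodes + 1) r ++ word213 o l)

theorem pairwise213 {R : ℕ → ℕ → Prop} {l : List ℕ} (h : ∀ x ∈ l, ∀ y ∈ l, R x y) :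
    l.Pairwise R := by
  rw [List.pairwise_iff_getElem]
  intro i j hi hj _
  exact h _ (by simp) _ (by simp)

theorem Av213_iff (l : List ℕ) : Av213 l ↔
    ∀ i j k : ℕ, ∀ (hij : i < j) (hjk : j < k) (hk : k < l.length),
      ¬ (l[j] < l[i] ∧ l[i] < l[k]) := by
  induction l with
  | nil => simp [Av213]
  | cons a t ih =>
    rw [Av213, ih, List.pairwise_iff_getElem]
    constructor
    · rintro ⟨h1, h2⟩ i j k hij hjk hk
      obtain ⟨j, rfl⟩ : ∃ j', j = j' + 1 := ⟨j - 1, by omega⟩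
      obtain ⟨k, rfl⟩ : ∃ k', k = k' + 1 := ⟨k - 1, by omega⟩
      have hk' : k < t.length := by simpa using hk
      rcases i with _ | i
      · exact h1 j k (by omega) hk' (by omega)
      · exact h2 i j k (by omega) (by omega) hk'
    · intro h
      refine ⟨fun j k hj hk hjk => ?_, fun i j k hij hjk hk => ?_⟩
      · exact h 0 (j + 1) (k + 1) (by omega) (by omega) (by simpa using hk)
      · exact h (i + 1) (j + 1) (k + 1) (by omega) (by omega) (by simpa using hk)

theorem Av213_sublist {l l' : List ℕ} (h : l'.Sublist l) : Av213 l → Av213 l' := by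
  induction h with
  | slnil => exact id
  | cons a h ih => exact fun H => ih H.2
  | cons_cons a h ih => exact fun H => ⟨H.1.sublist h, ih H.2⟩

theorem Av213_append {u v : List ℕ} (hu : Av213 u) (hv : Av213 v)
    (h : ∀ x ∈ u, ∀ y ∈ v, y < x) : Av213 (u ++ v) := by
  induction u with
  | nil => simpa using hv
  | cons a u ih =>
    refine ⟨?_, ih hu.2 fun x hx => h x (by simp [hx])⟩
    change List.Pairwise _ (u ++ v)
    rw [List.pairwise_append]
    have ha := h a (by simp)
    refine ⟨hu.1, ?_, fun x _ y hy => ?_⟩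
    · apply pairwise213
      intro x _ y hy
      have := ha y hy
      omega
    · have := ha y hy
      omega

theorem split213 (a : ℕ) (t : List ℕ) (ha : a ∉ t)
    (h : t.Pairwise (fun x y => ¬ (x < a ∧ a < y))) :
    t = t.filter (fun x => a < x) ++ t.filter (fun x => x < a) := by
  induction t with
  | nil => rfl
  | cons b t ih =>
    simp only [List.mem_cons, not_or] at ha
    rw [List.pairwise_cons] at h
    have IH := ih ha.2 h.2
    rcases lt_or_gt_of_ne ha.1 with hb | hb
    · have : ¬ b < a := by omega
      simp only [List.filter_cons, hb, this, decide_true, decide_false, if_true]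
      simpa using IH
    · have h0 : (b :: t).filter (fun x => a < x) = [] := by
        rw [List.filter_eq_nil_iff]
        intro x hx
        rcases List.mem_cons.1 hx with rfl | hx
        · simp; omega
        · have := h.1 x hx
          simp; omega
      have h1 : (b :: t).filter (fun x => x < a) = b :: t := by
        rw [List.filter_eq_self]
        intro x hx
        rcases List.mem_cons.1 hx with rfl | hx
        · simpa using hb
        · have := h.1 x hx
          have : a ≠ x := fun e => ha.2 (e ▸ hx)
          simp; omega
      rw [h0, h1]; rfl

theorem word213_length (o : ℕ) (t : BinaryTree Unit) : (word213 o t).length = t.numNodes := by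
  induction t generalizing o with
  | nil => rfl
  | node _ l r ihl ihr => simp [word213, BinaryTree.numNodes, ihl, ihr]; omega

theorem word213_inj (o : ℕ) (s t : BinaryTree Unit) (h : word213 o s = word213 o t) : s = t := by
  induction s generalizing o t with
  | nil => cases t with
    | nil => rfl
    | node _ l r => simp [word213] at h
  | node _ l r ihl ihr => cases t with
    | nil => simp [word213] at h
    | node _ l' r' =>
      simp only [word213, List.cons.injEq] at h
      obtain ⟨h1, h2⟩ := h
      have h1 : l.numNodes = l'.numNodes := by omega
      rw [h1] at h2
      obtain ⟨h3, h4⟩ := List.append_inj' h2 (by simp [word213_length, h1])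
      rw [ihl _ _ h4, ihr _ _ h3]

theorem word213_spec (o : ℕ) (t : BinaryTree Unit) :
    Arr213 o t.numNodes (word213 o t) ∧ Av213 (word213 o t) := by
  induction t generalizing o with
  | nil =>
    refine ⟨⟨by simp [word213], fun x => ?_⟩, by simp [word213, Av213]⟩
    simp [word213, BinaryTree.numNodes]
  | node _ l r ihl ihr =>
    obtain ⟨⟨l1, l2⟩, l3⟩ := ihl o
    obtain ⟨⟨r1, r2⟩, r3⟩ := ihr (o + l.numNodes + 1)
    refine ⟨⟨?_, fun x => ?_⟩, ?_, ?_⟩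
    · simp only [word213, List.nodup_cons, List.mem_append, l2, r2, List.nodup_append]
      refine ⟨by omega, r1, l1, fun a ha b hb => by omega⟩
    · simp only [word213, List.mem_cons, List.mem_append, l2, r2, BinaryTree.numNodes]
      omega
    · rw [List.pairwise_append]
      refine ⟨?_, ?_, fun x _ y hy => ?_⟩
      · apply pairwise213
        intro x hx y hy
        rw [r2] at hx
        omega
      · apply pairwise213
        intro x hx y hy
        rw [l2] at hy
        omega
      · rw [l2] at hy
        omega
    · apply Av213_append r3 l3
      intro x hx y hy
      rw [r2] at hx
      rw [l2] at hy
      omega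

theorem word213_surj (m : ℕ) : ∀ (o n : ℕ) (w : List ℕ), w.length ≤ m → Arr213 o n w → Av213 w →
    ∃ t : BinaryTree Unit, t.numNodes = n ∧ word213 o t = w := by
  induction m with
  | zero =>
    intro o n w hw h1 h2
    obtain rfl : w = [] := List.length_eq_zero_iff.1 (by omega)
    refine ⟨.nil, ?_, rfl⟩
    have := h1.2 o
    simp [BinaryTree.numNodes] at this ⊢
    exact this.symm
  | succ m ih =>
    intro o n w hw h1 h2
    rcases w with _ | ⟨a, t⟩
    · exact ih o n [] (by simp) h1 h2
    obtain ⟨nd, hm⟩ := h1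
    rw [List.nodup_cons] at nd
    have ha := (hm a).1 (by simp)
    have hmt : ∀ x, x ∈ t ↔ o ≤ x ∧ x < o + n ∧ x ≠ a := by
      intro x
      have := hm x
      rw [List.mem_cons] at this
      constructor
      · intro hx
        have hne : x ≠ a := fun e => nd.1 (e ▸ hx)
        have := this.1 (Or.inr hx)
        omega
      · rintro ⟨p, q, r⟩
        exact (this.2 ⟨p, q⟩).resolve_left r
    have hlen : t.length ≤ m := by simpa using hw
    obtain ⟨r, r1, r2⟩ := ih (a + 1) (o + n - a - 1) (t.filter (fun x => a < x))
      ((List.length_filter_le _ _).trans hlen)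
      ⟨nd.2.filter _, fun x => by simp only [List.mem_filter, hmt, decide_eq_true_eq]; omega⟩
      (Av213_sublist List.filter_sublist h2.2)
    obtain ⟨l, l1, l2⟩ := ih o (a - o) (t.filter (fun x => x < a))
      ((List.length_filter_le _ _).trans hlen)
      ⟨nd.2.filter _, fun x => by simp only [List.mem_filter, hmt, decide_eq_true_eq]; omega⟩
      (Av213_sublist List.filter_sublist h2.2)
    refine ⟨.node () l r, by simp only [BinaryTree.numNodes]; omega, ?_⟩
    have e : o + l.numNodes = a := by omega
    simp only [word213, e, r2, l2]
    rw [← split213 a t nd.1 h2.1]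

theorem contains213_iff {n : ℕ} (π : Equiv.Perm (Fin n)) :
    ¬ contains213 π ↔ Av213 (List.ofFn (fun i => (π i : ℕ))) := by
  rw [Av213_iff]
  constructor
  · intro h i j k hij hjk hk hh
    simp only [List.length_ofFn] at hk
    simp only [List.getElem_ofFn] at hh
    apply h
    obtain ⟨h1, h2⟩ := hh
    clear h
    induction k with
    | zero => omega
    | succ k ih =>
      rcases Nat.lt_or_ge j k with hjk' | hjk'
      · rcases lt_trichotomy (π ⟨k, by omega⟩) (π ⟨i, by omega⟩) with hlt | heq | hgt
        · exact ⟨i, k, by omega, hk, hlt, h2⟩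
        · have := congrArg Fin.val (π.injective heq)
          simp at this
          omega
        · exact ih hjk' (by simp; omega) (by omega) h1 hgt
      · obtain rfl : j = k := by omega
        exact ⟨i, j, hij, hk, h1, h2⟩
  · rintro h ⟨i, j, hij, hj, h1, h2⟩
    apply h i j (j + 1) hij (by omega) (by simpa using hj)
    simp only [List.getElem_ofFn]
    exact ⟨h1, h2⟩

theorem arr213_perm {n : ℕ} (π : Equiv.Perm (Fin n)) :
    Arr213 0 n (List.ofFn (fun i => (π i : ℕ))) := by
  refine ⟨List.nodup_ofFn.2 (Fin.val_injective.comp π.injective), fun x => ?_⟩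
  rw [List.mem_ofFn]
  constructor
  · rintro ⟨i, rfl⟩
    have := (π i).isLt
    simp
  · rintro ⟨_, h⟩
    exact ⟨π.symm ⟨x, by omega⟩, by simp⟩

theorem perm_of_arr213 {n : ℕ} (w : List ℕ) (h : Arr213 0 n w) :
    ∃ π : Equiv.Perm (Fin n), List.ofFn (fun i => (π i : ℕ)) = w := by
  have hp : w.Perm (List.range n) := by
    rw [List.perm_ext_iff_of_nodup h.1 List.nodup_range]
    intro x
    rw [h.2, List.mem_range]
    omega
  have hl : w.length = n := by simpa using hp.length_eq
  subst hl
  let f : Fin w.length → Fin w.length := fun i =>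
    ⟨w[i], by have := (h.2 w[i]).1 (by simp); omega⟩
  have hf : Function.Injective f := by
    intro i j hij
    have := congrArg Fin.val hij
    exact Fin.ext ((h.1.getElem_inj_iff).1 this)
  refine ⟨Equiv.ofBijective f (Finite.injective_iff_bijective.1 hf), ?_⟩
  apply List.ext_getElem
  · simp
  · intro i h1 h2
    simp [f]

theorem stmt2 (n : ℕ) :
    Nat.card {π : Equiv.Perm (Fin n) // ¬ contains213 π} = Nat.choose (2 * n) n / (n + 1) := by
  have key := catalan_eq_centralBinom_div n
  rw [Nat.centralBinom_eq_two_mul_choose] at key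
  rw [← key, ← BinaryTree.treesOfNumNodesEq_card_eq_catalan, ← Nat.card_eq_finsetCard]
  have h1 : Nat.card {π : Equiv.Perm (Fin n) // ¬ contains213 π} =
      Nat.card {w : List ℕ // Arr213 0 n w ∧ Av213 w} := by
    refine Nat.card_eq_of_bijective
      (fun p => ⟨List.ofFn (fun i => (p.1 i : ℕ)), arr213_perm p.1, (contains213_iff p.1).1 p.2⟩)
      ⟨?_, ?_⟩
    · rintro ⟨p, hp⟩ ⟨q, hq⟩ h
      have h' := congrFun (List.ofFn_injective (congrArg Subtype.val h))
      exact Subtype.ext (Equiv.ext fun i => Fin.ext (h' i))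
    · rintro ⟨w, hw, hv⟩
      obtain ⟨p, rfl⟩ := perm_of_arr213 w hw
      exact ⟨⟨p, (contains213_iff p).2 hv⟩, rfl⟩
  rw [h1]
  symm
  refine Nat.card_eq_of_bijective
    (fun t => ⟨word213 0 t.1, by
      have ht := BinaryTree.mem_treesOfNumNodesEq.1 t.2
      have := word213_spec 0 t.1
      rwa [ht] at this⟩) ⟨?_, ?_⟩
  · rintro ⟨s, hs⟩ ⟨t, ht⟩ h
    exact Subtype.ext (word213_inj 0 s t (congrArg Subtype.val h))
  · rintro ⟨w, hw, hv⟩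
    obtain ⟨t, ht, rfl⟩ := word213_surj w.length 0 n w le_rfl hw hv
    exact ⟨⟨t, BinaryTree.mem_treesOfNumNodesEq.2 ht⟩, rfl⟩
end

section
/- For all n, the number of permutations of [n] avoiding both generalized patterns 1-23 and 21-3 equals the n-th Motzkin number M_n; equivalently, |S_n(1-23, 21-3)| = |S_n(1-23, 13-2)|. -/
def contains123 {n : ℕ} (π : Equiv.Perm (Fin n)) : Prop :=
  ∃ i j : ℕ, ∃ (_ : i < j) (hj : j + 1 < n),
    π ⟨i, by omega⟩ < π ⟨j, by omega⟩ ∧ π ⟨j, by omega⟩ < π ⟨j + 1, hj⟩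

def contains21_3 {n : ℕ} (π : Equiv.Perm (Fin n)) : Prop :=
  ∃ i j : ℕ, ∃ (_ : i + 1 < j) (hj : j < n),
    π ⟨i + 1, by omega⟩ < π ⟨i, by omega⟩ ∧ π ⟨i, by omega⟩ < π ⟨j, hj⟩

def contains13_2 {n : ℕ} (π : Equiv.Perm (Fin n)) : Prop :=
  ∃ i j : ℕ, ∃ (_ : i + 1 < j) (hj : j < n),
    π ⟨i, by omega⟩ < π ⟨j, hj⟩ ∧ π ⟨j, hj⟩ < π ⟨i + 1, by omega⟩

def motzkin : ℕ → ℕ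
  | 0 => 1
  | n + 1 => motzkin n + ∑ k ∈ (Finset.range n).attach,
      motzkin k * motzkin (n - 1 - k)
  decreasing_by
  · exact Nat.lt_succ_self n
  · have := Finset.mem_range.mp k.2; omega
  · have := Finset.mem_range.mp k.2; omega

open Finset in
theorem motzkin_succ (n : ℕ) :
    motzkin (n + 1) = motzkin n + ∑ k ∈ range n, motzkin k * motzkin (n - 1 - k) := by
  rw [motzkin, Finset.sum_attach (range n) (fun k => motzkin k * motzkin (n - 1 - k))]

/-- Motzkin generating function -/
noncomputable def MM : PowerSeries ℤ := PowerSeries.mk fun n => (motzkin n : ℤ)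

theorem MM_eq : MM = 1 + PowerSeries.X * MM + PowerSeries.X * (PowerSeries.X * (MM * MM)) := by
  ext n
  rcases n with _ | _ | n
  · simp [MM, motzkin]
  · simp [MM, PowerSeries.coeff_succ_X_mul, motzkin_succ, PowerSeries.coeff_one]
  · simp only [map_add, PowerSeries.coeff_succ_X_mul]
    simp only [PowerSeries.coeff_mul,
      Finset.Nat.sum_antidiagonal_eq_sum_range_succ_mk]
    simp only [MM, PowerSeries.coeff_mk]
    rw [motzkin_succ]
    simp [PowerSeries.coeff_one]

/-- Insert value `a` at position `p`. -/
def insPerm {n : ℕ} (p a : Fin (n + 1)) (π : Equiv.Perm (Fin n)) : Equiv.Perm (Fin (n + 1)) :=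
  (finSuccEquiv' p).trans ((Equiv.optionCongr π).trans (finSuccEquiv' a).symm)

theorem insPerm_self {n : ℕ} (p a : Fin (n + 1)) (π : Equiv.Perm (Fin n)) :
    insPerm p a π p = a := by simp [insPerm]

theorem insPerm_succAbove {n : ℕ} (p a : Fin (n + 1)) (π : Equiv.Perm (Fin n)) (i : Fin n) :
    insPerm p a π (p.succAbove i) = a.succAbove (π i) := by simp [insPerm]

theorem bij_pos {n : ℕ} : Function.Bijective
    (fun x : Equiv.Perm (Fin n) × Fin (n + 1) => insPerm x.2 0 x.1) := by
  rw [Fintype.bijective_iff_injective_and_card]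
  constructor
  · rintro ⟨π, p⟩ ⟨σ, q⟩ h
    simp only at h
    have hp : p = q := by
      have h1 := insPerm_self p 0 π
      have h2 := insPerm_self q 0 σ
      rw [h] at h1
      exact (insPerm q 0 σ).injective (h1.trans h2.symm)
    subst hp
    have : π = σ := by
      ext i
      have h1 := insPerm_succAbove p 0 π i
      rw [h, insPerm_succAbove] at h1
      rw [Fin.succAbove_right_injective h1]
    rw [this]
  · simp [Fintype.card_perm, Nat.factorial_succ, mul_comm]

theorem bij_val {n : ℕ} : Function.Bijective
    (fun x : Equiv.Perm (Fin n) × Fin (n + 1) => insPerm 0 x.2 x.1) := by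
  rw [Fintype.bijective_iff_injective_and_card]
  constructor
  · rintro ⟨π, p⟩ ⟨σ, q⟩ h
    simp only at h
    have hp : p = q := by
      rw [← insPerm_self 0 p π, ← insPerm_self 0 q σ, h]
    subst hp
    have : π = σ := by
      ext i
      have h1 := insPerm_succAbove 0 p π i
      rw [h, insPerm_succAbove] at h1
      rw [Fin.succAbove_right_injective h1]
    rw [this]
  · simp [Fintype.card_perm, Nat.factorial_succ, mul_comm]

/-- The word of a permutation, as a function on naturals. -/
def vv {n : ℕ} (π : Equiv.Perm (Fin n)) (i : ℕ) : ℕ := if h : i < n then (π ⟨i, h⟩ : ℕ) else 0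

theorem vv_lt {n : ℕ} (π : Equiv.Perm (Fin n)) {i : ℕ} (h : i < n) : vv π i < n := by
  simp [vv, h]

theorem vv_inj {n : ℕ} (π : Equiv.Perm (Fin n)) {i j : ℕ} (hi : i < n) (hj : j < n)
    (h : vv π i = vv π j) : i = j := by
  simp only [vv, hi, hj, dif_pos] at h
  have := π.injective (Fin.ext h)
  simpa using this

theorem vv_surj {n : ℕ} (π : Equiv.Perm (Fin n)) {i : ℕ} (hi : i < n) :
    ∃ j < n, vv π j = i :=
  ⟨π.symm ⟨i, hi⟩, (π.symm ⟨i, hi⟩).2, by simp [vv]⟩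

theorem vv_pos {n : ℕ} (p : Fin (n + 1)) (π : Equiv.Perm (Fin n)) (i : ℕ) (hi : i < n + 1) :
    vv (insPerm p 0 π) i =
      if i < p then vv π i + 1 else if i = p then 0 else vv π (i - 1) + 1 := by
  simp only [vv, hi, dif_pos]
  split_ifs with h1 h2 h3 h4 h5
  · have := insPerm_succAbove p 0 π ⟨i, h2⟩
    rw [Fin.succAbove_of_castSucc_lt _ _ (by simpa [Fin.lt_def] using h1)] at this
    simp at this
    simp [this]
  · omega
  · subst h3
    simp [insPerm_self]
  · have := insPerm_succAbove p 0 π ⟨i - 1, h4⟩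
    rw [Fin.succAbove_of_le_castSucc _ _ (by simp [Fin.le_def]; omega)] at this
    have e : Fin.succ ⟨i - 1, h4⟩ = ⟨i, hi⟩ := by ext; simp; omega
    rw [e] at this
    simp at this
    simp [this]
  · omega

theorem vv_val_zero {n : ℕ} (a : Fin (n + 1)) (π : Equiv.Perm (Fin n)) :
    vv (insPerm 0 a π) 0 = a := by
  have := insPerm_self 0 a π
  simp [vv, this]

theorem vv_val_succ {n : ℕ} (a : Fin (n + 1)) (π : Equiv.Perm (Fin n)) (i : ℕ) (hi : i < n) :
    vv (insPerm 0 a π) (i + 1) = if vv π i < a then vv π i else vv π i + 1 := by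
  have := insPerm_succAbove 0 a π ⟨i, hi⟩
  simp at this
  simp [vv, hi, this, Fin.succAbove, Fin.lt_def]
  split_ifs <;> simp

def P1 (n : ℕ) (f : ℕ → ℕ) : Prop := ∀ i j, i < j → j + 1 < n → f i < f j → ¬ f j < f (j + 1)
def P2 (n : ℕ) (f : ℕ → ℕ) : Prop := ∀ i j, i + 1 < j → j < n → f (i + 1) < f i → ¬ f i < f j
def P3 (n : ℕ) (f : ℕ → ℕ) : Prop := ∀ i j, i + 1 < j → j < n → f i < f j → ¬ f j < f (i + 1)

theorem P1_iff {n : ℕ} (π : Equiv.Perm (Fin n)) : ¬ contains123 π ↔ P1 n (vv π) := by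
  unfold contains123 P1
  push Not
  refine forall₂_congr fun i j => forall₂_congr fun h1 h2 => ?_
  simp [vv, h2, show j < n by omega, show i < n by omega]

theorem P2_iff {n : ℕ} (π : Equiv.Perm (Fin n)) : ¬ contains21_3 π ↔ P2 n (vv π) := by
  unfold contains21_3 P2
  push Not
  refine forall₂_congr fun i j => forall₂_congr fun h1 h2 => ?_
  simp [vv, h2, show i + 1 < n by omega, show i < n by omega]

theorem P3_iff {n : ℕ} (π : Equiv.Perm (Fin n)) : ¬ contains13_2 π ↔ P3 n (vv π) := by
  unfold contains13_2 P3
  push Not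
  refine forall₂_congr fun i j => forall₂_congr fun h1 h2 => ?_
  simp [vv, h2, show i + 1 < n by omega, show i < n by omega]

/-! ### Class A -/

/-- `c` is the index just past the last ascent top (0 if there is no ascent). -/
noncomputable def cut (n : ℕ) (f : ℕ → ℕ) : ℕ :=
  open Classical in
  (Finset.range n).sup fun i => if i + 1 < n ∧ f i < f (i + 1) then i + 2 else 0

theorem cut_le_iff (n : ℕ) (f : ℕ → ℕ) (c : ℕ) :
    cut n f ≤ c ↔ ∀ i, i + 1 < n → f i < f (i + 1) → i + 2 ≤ c := by
  unfold cut
  rw [Finset.sup_le_iff]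
  constructor
  · intro h i h1 h2
    have := h i (by simp; omega)
    simpa [h1, h2] using this
  · intro h i hi
    split_ifs with h1
    · exact h i h1.1 h1.2
    · omega

theorem cut_le (n : ℕ) (f : ℕ → ℕ) : cut n f ≤ n := by
  rw [cut_le_iff]; intros; omega

theorem goodA_ins {n : ℕ} (p : Fin (n + 1)) (π : Equiv.Perm (Fin n)) :
    (P1 (n + 1) (vv (insPerm p 0 π)) ∧ P2 (n + 1) (vv (insPerm p 0 π))) ↔
      (P1 n (vv π) ∧ P2 n (vv π)) ∧ cut n (vv π) ≤ p := by
  rw [cut_le_iff]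
  have hv := vv_pos p π
  have hp := p.2
  generalize (p : ℕ) = q at *
  have hinj := fun i j => @vv_inj n π i j
  generalize vv (insPerm p 0 π) = g at *
  generalize vv π = f at *
  constructor
  · rintro ⟨h1, h2⟩
    have hc : ∀ i, i + 1 < n → f i < f (i + 1) → i + 2 ≤ q := by
      intro i hi hlt
      by_contra hq
      rcases Nat.lt_or_ge i q with h | h
      ·
        have := h2 i (i + 2) (by omega) (by omega)
        rw [hv i (by omega), hv (i + 1) (by omega), hv (i + 2) (by omega)] at this
        grind
      · have := h1 q (i + 1) (by omega) (by omega)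
        rw [hv q (by omega), hv (i + 1) (by omega), hv (i + 1 + 1) (by omega)] at this
        grind
    refine ⟨⟨?_, ?_⟩, hc⟩
    · intro i j hij hj hlt hlt2
      have := hc j hj hlt2
      have := h1 i j hij (by omega)
      rw [hv i (by omega), hv j (by omega), hv (j + 1) (by omega)] at this
      grind
    · intro i j hij hj hlt hlt2
      rcases Nat.lt_trichotomy (i + 1) q with h | h | h
      · have := h2 i (if j < q then j else j + 1) (by grind) (by grind)
        rw [hv i (by omega), hv (i + 1) (by omega), hv _ (by grind)] at this
        grind
      · have := h2 i (j + 1) (by omega) (by omega)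
        rw [hv i (by omega), hv (i + 1) (by omega), hv _ (by omega)] at this
        grind
      · have := h2 (i + 1) (j + 1) (by omega) (by omega)
        rw [hv (i + 1) (by omega), hv (i + 1 + 1) (by omega), hv _ (by omega)] at this
        grind
  · rintro ⟨⟨h1, h2⟩, hc⟩
    have hdec : ∀ d i, q ≤ i + 1 → i + 1 + d < n → f (i + 1 + d) < f i := by
      intro d
      induction d with
      | zero =>
        intro i hi hn
        have := hc i (by omega)
        have := hinj i (i + 1) (by omega) (by omega)
        grind
      | succ d ih =>
        intro i hi hn
        have h3 := ih i hi (by omega)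
        have := hc (i + 1 + d) (by omega)
        have := hinj (i + 1 + d) (i + 1 + d + 1) (by omega) (by omega)
        grind
    have hdec' : ∀ i j, q ≤ i + 1 → i < j → j < n → f j < f i := by
      intro i j hi hj hn
      have := hdec (j - i - 1) i hi (by omega)
      rwa [show i + 1 + (j - i - 1) = j by omega] at this
    constructor
    · intro i j hij hj
      rw [hv i (by omega), hv j (by omega), hv (j + 1) (by omega)]
      rcases Nat.lt_trichotomy (j + 1) q with h | h | h
      · have := h1 i j hij (by omega)
        grind
      · grind
      · rcases Nat.lt_or_ge q j with h' | h'
        · have := hdec' (j - 1) j (by omega) (by omega) (by omega)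
          grind
        · grind
    · intro i j hij hj
      rw [hv i (by omega), hv (i + 1) (by omega), hv j (by omega)]
      rcases Nat.lt_trichotomy (i + 1) q with h | h | h
      · have := h2 i j
        have := h2 i (j - 1)
        grind
      · have := hdec' i (j - 1)
        grind
      · have := hdec' (i - 1) (j - 1)
        grind

theorem cut_ins {n : ℕ} (p : Fin (n + 1)) (π : Equiv.Perm (Fin n)) (h : cut n (vv π) ≤ p) :
    cut (n + 1) (vv (insPerm p 0 π)) = if (p : ℕ) = n then cut n (vv π) else p + 2 := by
  have hv := vv_pos p π
  have hp := p.2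
  have hle := cut_le n (vv π)
  split_ifs with hpn
  · apply eq_of_forall_ge_iff
    intro c
    rw [cut_le_iff, cut_le_iff]
    constructor
    · intro h' i hi hlt
      have := h' i (by omega)
      rw [hv i (by omega), hv (i + 1) (by omega)] at this
      grind
    · intro h' i hi
      have := h' i
      rw [hv i (by omega), hv (i + 1) (by omega)]
      grind
  · rw [cut_le_iff] at h
    apply eq_of_forall_ge_iff
    intro c
    rw [cut_le_iff]
    constructor
    · intro h'
      apply h' p (by omega)
      rw [hv p (by omega), hv (p + 1) (by omega)]
      grind
    · intro h' i hi
      rw [hv i (by omega), hv (i + 1) (by omega)]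
      have := h i
      have := h (i - 1)
      grind

def tA : ℕ → ℕ → ℕ
  | 0, _ => 1
  | m + 1, l => tA m (l + 1) + ∑ j ∈ Finset.range l, tA m j

theorem sumA (t : ℕ → ℕ) (n c : ℕ) (hc : c ≤ n) :
    (∑ p : Fin (n + 1), if c ≤ (p : ℕ) then
      t (n + 1 - (if (p : ℕ) = n then c else p + 2)) else 0) =
    t (n - c + 1) + ∑ j ∈ Finset.range (n - c), t j := by
  rw [Fin.sum_univ_castSucc, add_comm]
  congr 1
  · simp [hc, show n + 1 - c = n - c + 1 by omega]
  · have : ∀ i : Fin n, (if c ≤ ((Fin.castSucc i : Fin (n + 1)) : ℕ) then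
        t (n + 1 - (if ((Fin.castSucc i : Fin (n + 1)) : ℕ) = n then c
          else ((Fin.castSucc i : Fin (n + 1)) : ℕ) + 2)) else 0)
        = (fun k => if k < n - c then t k else 0) (n - 1 - (i : ℕ)) := by
      intro i
      have := i.2
      simp only [Fin.val_castSucc, this.ne, if_false]
      rw [show n + 1 - ((i : ℕ) + 2) = n - 1 - i by omega]
      by_cases h : c ≤ (i : ℕ)
      · rw [if_pos h, if_pos (by omega)]
      · rw [if_neg h, if_neg (by omega)]
    rw [Finset.sum_congr rfl fun i _ => this i,
      Fin.sum_univ_eq_sum_range (fun i => (fun k => if k < n - c then t k else 0) (n - 1 - i)) n,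
      Finset.sum_range_reflect (fun k => if k < n - c then t k else 0) n, ← Finset.sum_filter]
    congr 1
    ext k
    simp
    omega

open Classical in
theorem stepA (n m : ℕ) :
    (∑ π : Equiv.Perm (Fin (n + 1)), if P1 (n + 1) (vv π) ∧ P2 (n + 1) (vv π) then
      tA m (n + 1 - cut (n + 1) (vv π)) else 0) =
    ∑ π : Equiv.Perm (Fin n), if P1 n (vv π) ∧ P2 n (vv π) then
      tA (m + 1) (n - cut n (vv π)) else 0 := by
  rw [← Function.Bijective.sum_comp bij_pos, Fintype.sum_prod_type]
  refine Finset.sum_congr rfl fun π _ => ?_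
  by_cases hg : P1 n (vv π) ∧ P2 n (vv π)
  · rw [if_pos hg, tA, ← sumA (tA m) n _ (cut_le _ _)]
    refine Finset.sum_congr rfl fun p _ => ?_
    by_cases hc : cut n (vv π) ≤ p
    · rw [if_pos hc, if_pos ((goodA_ins p π).2 ⟨hg, hc⟩), cut_ins p π hc]
    · rw [if_neg hc, if_neg fun h => hc ((goodA_ins p π).1 h).2]
  · rw [if_neg hg]
    exact Finset.sum_eq_zero fun p _ => if_neg fun h => hg ((goodA_ins p π).1 h).1

open Classical in
theorem totA (n m : ℕ) :
    (∑ π : Equiv.Perm (Fin n), if P1 n (vv π) ∧ P2 n (vv π) then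
      tA m (n - cut n (vv π)) else 0) = tA (n + m) 0 := by
  induction n generalizing m with
  | zero =>
    have : ∀ π : Equiv.Perm (Fin 0), P1 0 (vv π) ∧ P2 0 (vv π) := fun π =>
      ⟨fun i j _ h => by omega, fun i j _ h => by omega⟩
    simp [this]
  | succ n ih => rw [stepA, ih]; congr 1; omega

theorem cardA (n : ℕ) :
    Nat.card {π : Equiv.Perm (Fin n) // ¬ contains123 π ∧ ¬ contains21_3 π} = tA n 0 := by
  classical
  rw [← Nat.add_zero n, ← totA n 0, Nat.card_eq_fintype_card, Fintype.card_subtype]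
  simp [tA, P1_iff, P2_iff]

theorem serA_geom (l : ℕ) : PowerSeries.X * (∑ j ∈ Finset.range l,
    MM * (1 + PowerSeries.X * MM) ^ j) = (1 + PowerSeries.X * MM) ^ l - 1 := by
  induction l with
  | zero => simp
  | succ l ih => rw [Finset.sum_range_succ, mul_add, ih]; ring

theorem tA_coeff (m l : ℕ) :
    (tA m l : ℤ) = PowerSeries.coeff m (MM * (1 + PowerSeries.X * MM) ^ l) := by
  have key : ∀ l : ℕ, MM * (1 + PowerSeries.X * MM) ^ l = 1 + PowerSeries.X *
      (MM * (1 + PowerSeries.X * MM) ^ (l + 1) +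
        ∑ j ∈ Finset.range l, MM * (1 + PowerSeries.X * MM) ^ j) := by
    intro l
    rw [mul_add, serA_geom]
    linear_combination (1 + PowerSeries.X * MM) ^ l * MM_eq
  induction m generalizing l with
  | zero => rw [key]; simp [tA]
  | succ m ih =>
    rw [key]
    simp [tA, ih, PowerSeries.coeff_succ_X_mul, PowerSeries.coeff_one]

theorem tA_motzkin (n : ℕ) : tA n 0 = motzkin n := by
  have := tA_coeff n 0
  simp [MM] at this
  exact this

/-! ### Class B -/

theorem goodB_ins {n : ℕ} (a : Fin (n + 2)) (π : Equiv.Perm (Fin (n + 1))) :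
    (P1 (n + 2) (vv (insPerm 0 a π)) ∧ P3 (n + 2) (vv (insPerm 0 a π))) ↔
      (P1 (n + 1) (vv π) ∧ P3 (n + 1) (vv π)) ∧
        (vv π 0 < a ∨ ((a : ℕ) = vv π 0 ∧ ¬ (1 < n + 1 ∧ vv π 0 < vv π 1))) := by
  have h0 := vv_val_zero a π
  have hs := vv_val_succ a π
  have ha := a.2
  generalize (a : ℕ) = b at *
  have hinj := fun i j => @vv_inj (n + 1) π i j
  have hsurj := fun i => @vv_surj (n + 1) π i
  have hf0 : vv π 0 < n + 1 := vv_lt π (by omega)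
  generalize vv (insPerm 0 a π) = g at *
  generalize vv π = f at *
  have hlt : ∀ i j, i < n + 1 → j < n + 1 → (g (i + 1) < g (j + 1) ↔ f i < f j) := by
    intro i j hi hj
    rw [hs i hi, hs j hj]
    grind
  constructor
  · rintro ⟨h1, h3⟩
    refine ⟨⟨?_, ?_⟩, ?_⟩
    · intro i j hij hj
      have := h1 (i + 1) (j + 1) (by omega) (by omega)
      rwa [hlt _ _ (by omega) (by omega), hlt _ _ (by omega) (by omega)] at this
    · intro i j hij hj
      have := h3 (i + 1) (j + 1) (by omega) (by omega)
      rwa [hlt _ _ (by omega) (by omega), hlt _ _ (by omega) (by omega)] at this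
    · by_contra hcon
      push Not at hcon
      obtain ⟨hc1, hc2⟩ := hcon
      rcases hc1.lt_or_eq with h | h
      ·

        obtain ⟨j, hj, hfj⟩ : ∃ j < n + 1, f j = b := by
          apply hsurj
          by_contra hb



          omega
        have := h3 0 (j + 1) (by grind) (by omega)
        rw [h0, hs 0 (by omega), hs j hj] at this
        grind
      · obtain ⟨hn, hlt1⟩ := hc2 h
        have := h1 0 1 (by omega) (by omega)
        rw [h0, hs 0 (by omega), hs 1 (by omega)] at this
        grind
  · rintro ⟨⟨h1, h3⟩, hb⟩
    constructor
    · rintro (_ | i) (_ | j) hij hj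
      · omega
      · rw [hlt _ _ (by omega) (by omega), h0, hs j (by omega)]
        intro hl hl2
        rcases j with _ | j
        · grind
        · have := h1 0 (j + 1) (by omega) (by omega)
          have := hinj 0 (j + 1) (by omega) (by omega)
          grind
      · omega
      · rw [hlt _ _ (by omega) (by omega), hlt _ _ (by omega) (by omega)]
        exact h1 i j (by omega) (by omega)
    · rintro (_ | i) (_ | j) hij hj
      · omega
      · rw [hlt _ _ (by omega) (by omega), h0, hs j (by omega)]
        grind
      · omega
      · rw [hlt _ _ (by omega) (by omega), hlt _ _ (by omega) (by omega)]
        exact h3 i j (by omega) (by omega)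

/-- `tB m c u`: number of `m`-step descendants; `u` says that the word starts with an ascent. -/
def tB : ℕ → ℕ → Bool → ℕ
  | 0, _, _ => 1
  | m + 1, c, u => (∑ j ∈ Finset.range (c + 1), tB m j false) +
      (if u then 0 else tB m (c + 1) true)

theorem sumB (t : ℕ → ℕ) (n x y : ℕ) (hx : x ≤ n) (q : Prop) [Decidable q] :
    (∑ a : Fin (n + 2), if x < (a : ℕ) then t (n + 1 - a) else if (a : ℕ) = x ∧ ¬ q then y else 0) =
    (∑ j ∈ Finset.range (n - x + 1), t j) + (if q then 0 else y) := by
  have h1 : ∀ a : Fin (n + 2),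
      (if x < (a : ℕ) then t (n + 1 - a) else if (a : ℕ) = x ∧ ¬ q then y else 0) =
      (fun k => if k < n - x + 1 then t k else 0) (n + 2 - 1 - (a : ℕ)) +
        (if (a : ℕ) = x then (if q then 0 else y) else 0) := by
    intro a
    have := a.2
    grind
  rw [Finset.sum_congr rfl fun a _ => h1 a, Finset.sum_add_distrib]
  congr 1
  · rw [Fin.sum_univ_eq_sum_range
        (fun i => (fun k => if k < n - x + 1 then t k else 0) (n + 2 - 1 - i)) (n + 2),
      Finset.sum_range_reflect (fun k => if k < n - x + 1 then t k else 0) (n + 2),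
      ← Finset.sum_filter]
    congr 1
    ext k
    simp
    omega
  · rw [Fin.sum_univ_eq_sum_range (fun i => if i = x then (if q then 0 else y) else 0) (n + 2),
      Finset.sum_ite_eq']
    rw [if_pos (by simp; omega)]

open Classical in
theorem stepB (n m : ℕ) :
    (∑ π : Equiv.Perm (Fin (n + 2)), if P1 (n + 2) (vv π) ∧ P3 (n + 2) (vv π) then
      tB m (n + 1 - vv π 0) (decide (1 < n + 2 ∧ vv π 0 < vv π 1)) else 0) =
    ∑ π : Equiv.Perm (Fin (n + 1)), if P1 (n + 1) (vv π) ∧ P3 (n + 1) (vv π) then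
      tB (m + 1) (n - vv π 0) (decide (1 < n + 1 ∧ vv π 0 < vv π 1)) else 0 := by
  rw [← Function.Bijective.sum_comp bij_val, Fintype.sum_prod_type]
  refine Finset.sum_congr rfl fun π _ => ?_
  have hx : vv π 0 < n + 1 := vv_lt π (by omega)
  by_cases hg : P1 (n + 1) (vv π) ∧ P3 (n + 1) (vv π)
  · rw [if_pos hg, tB]
    simp only [decide_eq_true_eq]
    rw [← sumB (fun j => tB m j false) n (vv π 0) _ (by omega)]
    refine Finset.sum_congr rfl fun a _ => ?_
    have h0 := vv_val_zero a π
    have h1 := vv_val_succ a π 0 (by omega)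
    rw [zero_add] at h1
    simp only [goodB_ins, hg, true_and, h0, h1]
    by_cases hc : vv π 0 < a
    · simp only [hc, true_or, if_true]
      congr 1
      simp
      omega
    · by_cases hd : (a : ℕ) = vv π 0 ∧ ¬ (1 < n + 1 ∧ vv π 0 < vv π 1)
      · rw [if_pos (Or.inr hd), if_neg hc, if_pos hd]
        rw [if_neg hc, show n + 1 - (a : ℕ) = n - vv π 0 + 1 by omega]
        congr 1
        simp [hd.1]
      · rw [if_neg (by tauto), if_neg hc, if_neg hd]
  · rw [if_neg hg]
    exact Finset.sum_eq_zero fun p _ => if_neg fun h => hg ((goodB_ins p π).1 h).1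

open Classical in
theorem totB (n m : ℕ) :
    (∑ π : Equiv.Perm (Fin (n + 1)), if P1 (n + 1) (vv π) ∧ P3 (n + 1) (vv π) then
      tB m (n - vv π 0) (decide (1 < n + 1 ∧ vv π 0 < vv π 1)) else 0) = tB (n + m) 0 false := by
  induction n generalizing m with
  | zero =>
    have : ∀ π : Equiv.Perm (Fin (0 + 1)), P1 (0 + 1) (vv π) ∧ P3 (0 + 1) (vv π) := fun π =>
      ⟨fun i j _ h => by omega, fun i j _ h => by omega⟩
    simp [this]
  | succ n ih => rw [stepB, ih]; congr 1; omega

theorem cardB (n : ℕ) :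
    Nat.card {π : Equiv.Perm (Fin (n + 1)) // ¬ contains123 π ∧ ¬ contains13_2 π} =
      tB n 0 false := by
  classical
  have := totB n 0
  rw [show n + 0 = n from rfl] at this
  rw [← this, Nat.card_eq_fintype_card, Fintype.card_subtype]
  simp [tB, P1_iff, P3_iff]

theorem cardB_zero :
    Nat.card {π : Equiv.Perm (Fin 0) // ¬ contains123 π ∧ ¬ contains13_2 π} = 1 := by
  classical
  have : ∀ π : Equiv.Perm (Fin 0), P1 0 (vv π) ∧ P3 0 (vv π) := fun π =>
      ⟨fun i j _ h => by omega, fun i j _ h => by omega⟩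
  rw [Nat.card_eq_fintype_card, Fintype.card_subtype]
  simp [P1_iff, P3_iff, this]

theorem serB_geom (l : ℕ) : PowerSeries.X * (∑ j ∈ Finset.range l,
    (MM ^ (j + 1) + PowerSeries.X * MM ^ (j + 2))) = MM ^ l - 1 := by
  induction l with
  | zero => simp
  | succ l ih =>
    rw [Finset.sum_range_succ, mul_add, ih]
    linear_combination -MM ^ l * MM_eq

theorem tB_coeff (m c : ℕ) :
    (tB m c true : ℤ) = PowerSeries.coeff m (MM ^ (c + 1)) ∧
    (tB m c false : ℤ) = PowerSeries.coeff m (MM ^ (c + 1) + PowerSeries.X * MM ^ (c + 2)) := by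
  have key : ∀ c : ℕ, MM ^ (c + 1) = 1 + PowerSeries.X * (∑ j ∈ Finset.range (c + 1),
    (MM ^ (j + 1) + PowerSeries.X * MM ^ (j + 2))) := by
    intro c
    rw [serB_geom]; ring
  induction m generalizing c with
  | zero =>
    have : PowerSeries.coeff 0 (MM ^ (c + 1)) = 1 := by rw [key]; simp
    rw [map_add, this]
    simp [tB]
  | succ m ih =>
    have : PowerSeries.coeff (m + 1) (MM ^ (c + 1)) =
        ∑ j ∈ Finset.range (c + 1), (tB m j false : ℤ) := by
      rw [key, map_add, PowerSeries.coeff_succ_X_mul, map_sum]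
      simp only [ih]
      simp [PowerSeries.coeff_one]
    rw [map_add, this, PowerSeries.coeff_succ_X_mul]
    have h2 := (ih (c + 1)).1
    rw [← h2]
    simp [tB]

theorem tB_motzkin (n : ℕ) : tB n 0 false = motzkin (n + 1) := by
  have h := (tB_coeff n 0).2
  have h2 : (motzkin (n + 1) : ℤ) = PowerSeries.coeff (n + 1) MM := by simp [MM]
  rw [MM_eq, map_add, map_add, PowerSeries.coeff_succ_X_mul, PowerSeries.coeff_succ_X_mul] at h2
  rw [map_add] at h
  have : (tB n 0 false : ℤ) = motzkin (n + 1) := by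
    rw [h, h2]
    simp [PowerSeries.coeff_one, pow_two]
  exact_mod_cast this

theorem stmt12 (n : ℕ) :
    Nat.card {π : Equiv.Perm (Fin n) // ¬ contains123 π ∧ ¬ contains21_3 π} = motzkin n ∧
    Nat.card {π : Equiv.Perm (Fin n) // ¬ contains123 π ∧ ¬ contains21_3 π} = Nat.card {π : Equiv.Perm (Fin n) // ¬ contains123 π ∧ ¬ contains13_2 π} := by
  have hA : Nat.card {π : Equiv.Perm (Fin n) // ¬ contains123 π ∧ ¬ contains21_3 π} = motzkin n := by
    rw [cardA, tA_motzkin]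
  refine ⟨hA, ?_⟩
  rw [hA]
  rcases n with _ | n
  · rw [cardB_zero, motzkin]
  · rw [cardB, tB_motzkin]
end

section
/- For all n, the number of permutations of [n] avoiding both generalized patterns 1-23 and 3-12 equals b_n, where b_0 = b_1 = 1 and b_{n+2} = b_{n+1} + Σ_{k=0}^{n} binom(n,k) b_k. -/
def contains312 {n : ℕ} (π : Equiv.Perm (Fin n)) : Prop :=
  ∃ i j : ℕ, ∃ (_ : i < j) (hj : j + 1 < n),
    π ⟨j, by omega⟩ < π ⟨j + 1, hj⟩ ∧ π ⟨j + 1, hj⟩ < π ⟨i, by omega⟩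

def b : ℕ → ℕ
  | 0 => 1
  | 1 => 1
  | n + 2 => b (n + 1) + ∑ k ∈ (Finset.range (n + 1)).attach,
      Nat.choose n k * b k
  decreasing_by
  · exact Nat.lt_succ_self (n + 1)
  · have := Finset.mem_range.mp k.2; omega

/-- Goodness of the reversed word: every ascent has all earlier letters strictly in between. -/
def GoodRev : List ℕ → Prop
  | [] => True
  | [_] => True
  | y :: x :: l => (x < y → ∀ z ∈ l, x < z ∧ z < y) ∧ GoodRev (x :: l)

lemma GoodRev.tail {a : ℕ} {l : List ℕ} (h : GoodRev (a :: l)) : GoodRev l := by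
  cases l with
  | nil => trivial
  | cons x l => exact h.2

lemma GoodRev.of_append {l₁ l₂ : List ℕ} (h : GoodRev (l₁ ++ l₂)) : GoodRev l₂ := by
  induction l₁ with
  | nil => exact h
  | cons a l ih => exact ih h.tail

lemma GoodRev.cons_min {m : ℕ} {l : List ℕ} (h : GoodRev l) (hm : ∀ x ∈ l, m < x) :
    GoodRev (m :: l) := by
  cases l with
  | nil => trivial
  | cons x l =>
    refine ⟨fun hx => ?_, h⟩
    have := hm x (by simp)
    omega

lemma goodRev_sorted {m : ℕ} {σ : List ℕ} : ∀ τ : List ℕ, GoodRev (τ ++ m :: σ) →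
    (∀ x ∈ τ, m < x) → τ.Nodup → τ.Pairwise (· < ·)
  | [], _, _, _ => List.Pairwise.nil
  | [_], _, _, _ => by simp
  | y :: x :: t, h, hm, hn => by
    have ih := goodRev_sorted (x :: t) h.tail (fun z hz => hm z (by simp_all)) hn.of_cons
    have h1 : y < x := by
      by_contra hc
      have hne : y ≠ x := by
        rintro rfl
        simp at hn
      have h2 := (h.1 (by omega) m (by simp)).1
      have h3 := hm x (by simp)
      omega
    rw [List.pairwise_cons]
    refine ⟨fun z hz => ?_, ih⟩
    rcases List.mem_cons.1 hz with rfl | hz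
    · exact h1
    · exact h1.trans ((List.pairwise_cons.1 ih).1 z hz)

lemma goodRev_build {m M : ℕ} {σ : List ℕ} (hσ : GoodRev (M :: m :: σ)) : ∀ τ : List ℕ,
    (τ ++ [M]).Pairwise (· < ·) → GoodRev (τ ++ M :: m :: σ)
  | [], _ => hσ
  | [a], h => by
    have : a < M := by simpa using h
    exact ⟨fun h' => by omega, hσ⟩
  | y :: x :: t, h => by
    have ih := goodRev_build hσ (x :: t) (List.Pairwise.of_cons h)
    have : y < x := (List.pairwise_cons.1 h).1 x (by simp)
    exact ⟨fun h' => by omega, ih⟩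

open Classical in
/-- The good reversed words using every letter of `S` exactly once. -/
noncomputable def goodWords (S : Finset ℕ) : Finset (List ℕ) :=
  S.val.lists.toFinset.filter GoodRev

lemma mem_goodWords {S : Finset ℕ} {l : List ℕ} :
    l ∈ goodWords S ↔ l.Nodup ∧ (∀ x, x ∈ l ↔ x ∈ S) ∧ GoodRev l := by
  classical
  unfold goodWords
  rw [Finset.mem_filter, Multiset.mem_toFinset, Multiset.mem_lists_iff, ← and_assoc]
  refine and_congr_left fun _ => ?_
  constructor
  · intro h
    have h' : S.val = (l : Multiset ℕ) := h
    have hn := S.nodup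
    rw [h'] at hn
    refine ⟨by simpa using hn, fun x => ?_⟩
    rw [← Finset.mem_val, h']
    simp
  · rintro ⟨hn, hx⟩
    change S.val = (l : Multiset ℕ)
    rw [Multiset.Nodup.ext S.nodup (by simpa using hn)]
    intro a
    simp [hx]

lemma goodWords_card_rec (S : Finset ℕ) (m M : ℕ) (hm : m ∈ S) (hM : M ∈ S) (hlt : m < M)
    (hmin : ∀ x ∈ S, m ≤ x) (hmax : ∀ x ∈ S, x ≤ M) :
    (goodWords S).card = (goodWords (S.erase m)).card +
      ∑ T ∈ ((S.erase m).erase M).powerset, (goodWords T).card := by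
  classical
  set U := (S.erase m).erase M with hU
  have hUS : ∀ x, x ∈ U ↔ x ≠ M ∧ x ≠ m ∧ x ∈ S := by intro x; simp [hU]
  have hUlt : ∀ x ∈ U, m < x ∧ x < M := by
    intro x hx
    obtain ⟨h1, h2, h3⟩ := (hUS x).1 hx
    have := hmin x h3
    have := hmax x h3
    omega
  rw [← Finset.card_filter_add_card_filter_not (s := goodWords S) (fun l => l.head? = some m)]
  congr 1
  · symm
    refine Finset.card_bij (fun l _ => m :: l) ?_ ?_ ?_
    · intro l hl
      obtain ⟨h1, h2, h3⟩ := mem_goodWords.1 hl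
      rw [Finset.mem_filter, mem_goodWords]
      refine ⟨⟨?_, ?_, h3.cons_min ?_⟩, by simp⟩
      · simp [h1, h2]
      · intro x
        rw [List.mem_cons, h2, Finset.mem_erase]
        by_cases hx : x = m <;> simp [hx, hm]
      · intro x hx
        rw [h2, Finset.mem_erase] at hx
        have := hmin x hx.2
        omega
    · intro a _ c _ h
      simpa using h
    · intro l hl
      rw [Finset.mem_filter, mem_goodWords] at hl
      obtain ⟨⟨h1, h2, h3⟩, h4⟩ := hl
      cases l with
      | nil => simp at h4
      | cons a l =>
        obtain rfl : a = m := by simpa using h4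
        refine ⟨l, mem_goodWords.2 ⟨h1.of_cons, ?_, h3.tail⟩, rfl⟩
        intro x
        have h5 := h2 x
        have h6 := (List.nodup_cons.1 h1).1
        rw [Finset.mem_erase, ← h5, List.mem_cons]
        constructor
        · intro hx
          exact ⟨fun h => h6 (h ▸ hx), Or.inr hx⟩
        · rintro ⟨hx, hx' | hx'⟩
          · exact absurd hx' hx
          · exact hx'
  · rw [← Finset.card_sigma]
    symm
    refine Finset.card_bij
      (fun p _ => (U \ p.1).sort (· ≤ ·) ++ M :: m :: p.2) ?_ ?_ ?_
    · rintro ⟨T, σ⟩ hp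
      rw [Finset.mem_sigma, Finset.mem_powerset, mem_goodWords] at hp
      obtain ⟨hT, h1, h2, h3⟩ := hp
      dsimp only at hT h1 h2 h3 ⊢
      have hs : ∀ x ∈ σ, x ∈ U := fun x hx => hT ((h2 x).1 hx)
      have hG : GoodRev (M :: m :: σ) :=
        ⟨fun _ z hz => hUlt z (hs z hz), h3.cons_min fun x hx => (hUlt x (hs x hx)).1⟩
      rw [Finset.mem_filter, mem_goodWords]
      refine ⟨⟨?_, ?_, goodRev_build hG _ ?_⟩, ?_⟩
      · rw [List.nodup_append]
        refine ⟨Finset.sort_nodup _ _, ?_, ?_⟩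
        · have hMσ : M ∉ σ := fun h => by have := hUlt M (hs M h); omega
          have hmσ : m ∉ σ := fun h => by have := hUlt m (hs m h); omega
          simp [h1, hMσ, hmσ, hlt.ne']
        · intro a ha c hc hac
          subst hac
          rw [Finset.mem_sort, Finset.mem_sdiff] at ha
          have := hUlt a ha.1
          rw [List.mem_cons, List.mem_cons, h2] at hc
          rcases hc with hc | hc | hc
          · omega
          · omega
          · exact ha.2 hc
      · intro x
        simp only [List.mem_append, Finset.mem_sort, Finset.mem_sdiff, List.mem_cons, h2]
        have := hUS x
        have hT' := @hT x
        by_cases e1 : x = M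
        · simp [e1, hM]
        · by_cases e2 : x = m
          · simp [e2, hm]
          · tauto
      · rw [List.pairwise_append]
        refine ⟨(Finset.sortedLT_sort _).pairwise, by simp, ?_⟩
        intro a ha c hc
        rw [Finset.mem_sort, Finset.mem_sdiff] at ha
        obtain rfl : c = M := by simpa using hc
        exact (hUlt a ha.1).2
      · rcases hcs : (U \ T).sort (· ≤ ·) with _ | ⟨a, t⟩
        · simp [hlt.ne']
        · have : a ∈ (U \ T).sort (· ≤ ·) := by simp [hcs]
          rw [Finset.mem_sort, Finset.mem_sdiff] at this
          have := hUlt a this.1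
          simp
          omega
    · rintro ⟨T, σ⟩ hp ⟨T', σ'⟩ hp' heq
      rw [Finset.mem_sigma, Finset.mem_powerset, mem_goodWords] at hp hp'
      dsimp only at hp hp' heq
      have key : ∀ (V : Finset ℕ) (ρ : List ℕ), ((((U \ V).sort (· ≤ ·) ++ M :: m :: ρ).dropWhile
          (fun x => decide (x ≠ M))).drop 2) = ρ := by
        intro V ρ
        rw [List.dropWhile_append_of_pos]
        · simp
        · intro x hx
          rw [Finset.mem_sort, Finset.mem_sdiff] at hx
          have := hUlt x hx.1
          simp
          omega
      have hσ : σ = σ' := by rw [← key T σ, heq, key]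
      subst hσ
      have hT : T = T' := by
        ext x
        rw [← hp.2.2.1, ← hp'.2.2.1]
      subst hT
      rfl
    · intro l hl
      rw [Finset.mem_filter, mem_goodWords] at hl
      obtain ⟨⟨h1, h2, h3⟩, h4⟩ := hl
      obtain ⟨τ, σ, rfl⟩ := List.append_of_mem ((h2 m).2 hm)
      have hnd := List.nodup_append.1 h1
      have hτm : ∀ x ∈ τ, m < x := by
        intro x hx
        have := hmin x ((h2 x).1 (by simp [hx]))
        have := hnd.2.2 x hx m (by simp)
        omega
      have hσm : ∀ x ∈ σ, m < x := by
        intro x hx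
        have := hmin x ((h2 x).1 (by simp [hx]))
        have h5 := (List.nodup_cons.1 hnd.2.1).1
        have : x ≠ m := fun h => h5 (h ▸ hx)
        omega
      have hsort := goodRev_sorted τ h3 hτm hnd.1
      rcases List.eq_nil_or_concat τ with rfl | ⟨ρ, y, rfl⟩
      · simp at h4
      · rw [List.concat_eq_append] at *
        have hy : m < y := hτm y (by simp)
        have h3' : GoodRev (y :: m :: σ) := by
          have : GoodRev (ρ ++ (y :: m :: σ)) := by simpa using h3
          exact this.of_append
        have hσy := h3'.1 hy
        have hρ := List.pairwise_append.1 hsort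
        have hρy : ∀ x ∈ ρ, x < y := fun x hx => hρ.2.2 x hx y (by simp)
        have hyM : y = M := by
          have e1 : y ≤ M := hmax y ((h2 y).1 (by simp))
          have e2 := (h2 M).2 hM
          simp only [List.mem_append, List.mem_cons, List.not_mem_nil, or_false] at e2
          rcases e2 with (e | e) | e | e
          · have := hρy M e; omega
          · exact e.symm
          · omega
          · have := (hσy M e).2; omega
        subst hyM
        have hσU : ∀ x ∈ σ, x ∈ U := by
          intro x hx
          rw [hUS]
          have := hσy x hx
          exact ⟨by omega, by omega, (h2 x).1 (by simp [hx])⟩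
        refine ⟨⟨σ.toFinset, σ⟩, ?_, ?_⟩
        · rw [Finset.mem_sigma, Finset.mem_powerset, mem_goodWords]
          refine ⟨fun x hx => hσU x (by simpa using hx), (List.nodup_cons.1 hnd.2.1).2, by simp,
            h3'.tail.tail⟩
        · dsimp only
          have hset : U \ σ.toFinset = ρ.toFinset := by
            ext x
            rw [Finset.mem_sdiff, List.mem_toFinset, List.mem_toFinset, hUS, ← h2 x]
            simp only [List.mem_append, List.mem_cons, List.not_mem_nil, or_false]
            constructor
            · tauto
            · intro hx
              have e1 := hρy x hx
              have e2 := hτm x (by simp [hx])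
              refine ⟨⟨by omega, by omega, by tauto⟩, fun hx' => ?_⟩
              exact hnd.2.2 x (by simp [hx]) x (by simp [hx']) rfl
          have : (U \ σ.toFinset).sort (· ≤ ·) = ρ := by
            rw [hset]
            exact (List.toFinset_sort (· ≤ ·) (hρ.1.imp (fun h => h.ne))).2
              (hρ.1.imp (fun h => h.le))
          rw [this]
          simp

lemma b_rec (n : ℕ) : b (n + 2) = b (n + 1) + ∑ k ∈ Finset.range (n + 1), n.choose k * b k := by
  rw [b]
  congr 1
  exact Finset.sum_attach (Finset.range (n + 1)) (fun k => n.choose k * b k)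

lemma goodWords_card (n : ℕ) : ∀ S : Finset ℕ, S.card = n → (goodWords S).card = b n := by
  induction n using Nat.strong_induction_on with
  | _ n ih =>
    intro S hS
    rcases n with _ | _ | n
    · rw [Finset.card_eq_zero] at hS
      subst hS
      rw [b, Finset.card_eq_one]
      refine ⟨[], ?_⟩
      ext l
      rw [mem_goodWords, Finset.mem_singleton]
      constructor
      · rintro ⟨_, h, _⟩
        exact List.eq_nil_iff_forall_not_mem.2 fun x hx => by simpa using (h x).1 hx
      · rintro rfl
        exact ⟨by simp, by simp, trivial⟩
    · obtain ⟨a, rfl⟩ := Finset.card_eq_one.1 hS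
      rw [b, Finset.card_eq_one]
      refine ⟨[a], ?_⟩
      ext l
      rw [mem_goodWords, Finset.mem_singleton]
      constructor
      · rintro ⟨h1, h, _⟩
        have : l.Perm [a] := (List.perm_ext_iff_of_nodup h1 (by simp)).2 (by simpa using h)
        simpa using this
      · rintro rfl
        exact ⟨by simp, by simp, trivial⟩
    · have hne : S.Nonempty := Finset.card_pos.1 (by omega)
      have hlt : S.min' hne < S.max' hne := Finset.min'_lt_max'_of_card S (by omega)
      rw [goodWords_card_rec S (S.min' hne) (S.max' hne) (S.min'_mem hne) (S.max'_mem hne) hlt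
        (fun x hx => S.min'_le x hx) (fun x hx => S.le_max' x hx), b_rec]
      have c1 : (S.erase (S.min' hne)).card = n + 1 := by
        rw [Finset.card_erase_of_mem (S.min'_mem hne)]; omega
      have c2 : ((S.erase (S.min' hne)).erase (S.max' hne)).card = n := by
        rw [Finset.card_erase_of_mem, c1]
        · rfl
        · exact Finset.mem_erase.2 ⟨hlt.ne', S.max'_mem hne⟩
      rw [ih (n + 1) (by omega) _ c1]
      congr 1
      rw [Finset.sum_congr rfl (g := fun T => b T.card), Finset.sum_powerset_apply_card, c2]
      · simp
      · intro T hT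
        have := Finset.card_le_card (Finset.mem_powerset.1 hT)
        exact ih T.card (by omega) T rfl

lemma goodRev_iff (l : List ℕ) : GoodRev l ↔ ∀ (j i : ℕ) (hi : i < l.length) (hj : j + 1 < i),
    l[j + 1] < l[j] → l[j + 1] < l[i] ∧ l[i] < l[j] := by
  induction l with
  | nil => simp [GoodRev]
  | cons y l ih =>
    cases l with
    | nil => 
      simp only [GoodRev, true_iff]
      intro j i hi hj
      simp at hi
      omega
    | cons x l =>
      rw [GoodRev, ih]
      constructor
      · rintro ⟨h1, h2⟩ j i hi hj
        rcases j with _ | j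
        · rcases i with _ | _ | i
          · omega
          · omega
          · intro h
            simp only [List.getElem_cons_succ, List.getElem_cons_zero] at h ⊢
            exact h1 h _ (List.getElem_mem _)
        · rcases i with _ | i
          · omega
          · have := h2 j i (by simpa using hi) (by omega)
            simpa only [List.getElem_cons_succ] using this
      · intro h
        constructor
        · intro hxy z hz
          obtain ⟨i, hi, rfl⟩ := List.getElem_of_mem hz
          have := h 0 (i + 2) (by simpa using hi) (by omega)
          simpa using this hxy
        · intro j i hi hj
          have := h (j + 1) (i + 1) (by simpa using hi) (by omega)
          simpa only [List.getElem_cons_succ] using this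

/-- The reversed word of a permutation. -/
def revWord {n : ℕ} (π : Equiv.Perm (Fin n)) : List ℕ :=
  List.ofFn (fun i => (π (Fin.rev i)).val)

lemma goodRev_revWord {n : ℕ} (π : Equiv.Perm (Fin n)) :
    GoodRev (revWord π) ↔ ¬ contains123 π ∧ ¬ contains312 π := by
  rw [goodRev_iff]
  constructor
  · intro h
    have key : ∀ (i j : ℕ) (hij : i < j) (hj : j + 1 < n),
        π ⟨j, by omega⟩ < π ⟨j + 1, hj⟩ →
        π ⟨j, by omega⟩ < π ⟨i, by omega⟩ ∧ π ⟨i, by omega⟩ < π ⟨j + 1, hj⟩ := by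
      intro i j hij hj
      have := h (n - 1 - (j + 1)) (n - 1 - i) (by simp [revWord]; omega) (by omega)
      have e1 : n - (n - 1 - (j + 1) + 1 + 1) = j := by omega
      have e2 : n - (n - 1 - (j + 1) + 1) = j + 1 := by omega
      have e3 : n - (n - 1 - i + 1) = i := by omega
      simpa only [revWord, List.getElem_ofFn, Fin.rev, e1, e2, e3, Fin.val_fin_lt] using this
    constructor
    · rintro ⟨i, j, hij, hj, h1, h2⟩
      exact lt_asymm h1 (key i j hij hj h2).1
    · rintro ⟨i, j, hij, hj, h1, h2⟩
      exact lt_asymm h2 (key i j hij hj h1).2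
  · rintro ⟨h1, h2⟩ j i hi hj hlt
    have hn : i < n := by simpa [revWord] using hi
    simp only [revWord, List.getElem_ofFn, Fin.rev, Fin.val_fin_lt] at hlt ⊢
    have e2 : n - (j + 1) = n - (j + 1 + 1) + 1 := by omega
    simp only [e2] at hlt ⊢
    have ne1 : π ⟨n - (i + 1), by omega⟩ ≠ π ⟨n - (j + 1 + 1), by omega⟩ := by
      intro h
      have := congrArg Fin.val (π.injective h)
      simp only at this
      omega
    have ne2 : π ⟨n - (i + 1), by omega⟩ ≠ π ⟨n - (j + 1 + 1) + 1, by omega⟩ := by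
      intro h
      have := congrArg Fin.val (π.injective h)
      simp only at this
      omega
    constructor
    · by_contra hc
      exact h1 ⟨n - (i + 1), n - (j + 1 + 1), by omega, by omega,
        lt_of_le_of_ne (not_lt.1 hc) ne1, hlt⟩
    · by_contra hc
      exact h2 ⟨n - (i + 1), n - (j + 1 + 1), by omega, by omega, hlt,
        lt_of_le_of_ne (not_lt.1 hc) ne2.symm⟩

theorem stmt15 (n : ℕ) :
    Nat.card {π : Equiv.Perm (Fin n) // ¬ contains123 π ∧ ¬ contains312 π} = b n := by
  classical
  rw [Nat.card_eq_fintype_card, Fintype.card_subtype,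
    ← goodWords_card n (Finset.range n) (Finset.card_range n)]
  refine Finset.card_bij (fun π _ => revWord π) ?_ ?_ ?_
  · intro π hπ
    rw [mem_goodWords, goodRev_revWord]
    refine ⟨?_, ?_, by simpa using hπ⟩
    · rw [revWord, List.nodup_ofFn]
      intro i j h
      exact Fin.rev_injective (π.injective (Fin.ext h))
    · intro x
      rw [revWord, List.mem_ofFn, Finset.mem_range]
      constructor
      · rintro ⟨i, rfl⟩
        exact Fin.isLt _
      · intro hx
        exact ⟨Fin.rev (π.symm ⟨x, hx⟩), by simp⟩
  · intro π _ ρ _ h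
    have h' := List.ofFn_injective h
    ext i
    have := congrFun h' (Fin.rev i)
    simpa using this
  · intro l hl
    obtain ⟨h1, h2, h3⟩ := mem_goodWords.1 hl
    have hlen : l.length = n := by
      rw [← List.toFinset_card_of_nodup h1, ← Finset.card_range n]
      congr 1
      ext x
      rw [List.mem_toFinset, h2]
    subst hlen
    let f : Fin l.length → Fin l.length := fun i =>
      ⟨l.get (Fin.rev i), by
        have := (h2 (l.get (Fin.rev i))).1 (List.get_mem _ _)
        simpa using this⟩
    have hf : Function.Injective f := by
      intro i j h
      exact Fin.rev_injective (List.nodup_iff_injective_get.1 h1 (congrArg Fin.val h))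
    let π : Equiv.Perm (Fin l.length) := Equiv.ofBijective f (Finite.injective_iff_bijective.1 hf)
    have hw : revWord π = l := by
      have : (fun i => (π (Fin.rev i)).val) = l.get := by
        funext i
        change l.get (Fin.rev (Fin.rev i)) = l.get i
        rw [Fin.rev_rev]
      rw [revWord, this, List.ofFn_get]
    refine ⟨π, ?_, hw⟩
    rw [← hw, goodRev_revWord] at h3
    simpa using h3
end

section
/- The ordinary generating function Σ_{n≥0} a_n x^n of the numbers a_n of strongly monotone partitions of [n] satisfies Σ a_n x^n = 1/(1 − x − x²·B*(x)), where B*(x) = Σ_{n≥0} B*_n x^n is the generating function of the Bessel numbers (counting non-overlapping partitions). -/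
def StronglyMonotonePartition {n : ℕ} (P : Finpartition (Finset.univ : Finset (Fin n))) : Prop :=
  ∀ A ∈ P.parts, ∀ B ∈ P.parts, A.min < B.min → A.max < B.max

def NonOverlappingPartition {n : ℕ} (P : Finpartition (Finset.univ : Finset (Fin n))) : Prop :=
  ∀ A ∈ P.parts, ∀ B ∈ P.parts, ¬ (A.min < B.min ∧ B.min < A.max ∧ A.max < B.max)

noncomputable def a (n : ℕ) : ℕ :=
  Nat.card {P : Finpartition (Finset.univ : Finset (Fin n)) // StronglyMonotonePartition P}

noncomputable def bessel (n : ℕ) : ℕ :=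
  Nat.card {P : Finpartition (Finset.univ : Finset (Fin n)) // NonOverlappingPartition P}

namespace SMP

/-- set of open labels at time `t` -/
def O (s : ℕ → ℕ × Bool) : ℕ → Finset ℕ
  | 0 => ∅
  | t + 1 => if (s t).2 then (O s t).erase (s t).1 else insert (s t).1 (O s t)

def st (o : Finset ℕ) (c : ℕ × Bool) : Finset ℕ :=
  if c.2 then o.erase c.1 else insert c.1 o

def ok (R : ℕ → ℕ → Prop) (t : ℕ) (o : Finset ℕ) (c : ℕ × Bool) : Prop :=
  (c.1 = t ∨ c.1 ∈ o) ∧ (c.2 = true → ∀ x ∈ o, R c.1 x)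

open Classical in
noncomputable def ch (R : ℕ → ℕ → Prop) (t : ℕ) (o : Finset ℕ) : Finset (ℕ × Bool) :=
  ((insert t o) ×ˢ Finset.univ).filter (ok R t o)

lemma mem_ch {R t o c} : c ∈ ch R t o ↔ ok R t o c := by
  simp only [ch, Finset.mem_filter, Finset.mem_product, Finset.mem_insert, Finset.mem_univ,
    and_true, and_iff_right_iff_imp]
  exact fun h => h.1

open Classical in
noncomputable def F (R : ℕ → ℕ → Prop) : ℕ → Finset (ℕ → ℕ × Bool)
  | 0 => {fun _ => (0, false)}
  | n + 1 => (F R n).biUnion fun s => (ch R n (O s n)).image fun c => Function.update s n c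

lemma O_congr {s s' : ℕ → ℕ × Bool} : ∀ {t : ℕ}, (∀ u < t, s u = s' u) → O s t = O s' t
  | 0, _ => rfl
  | t + 1, h => by
    have := O_congr (s := s) (s' := s') (t := t) (fun u hu => h u (by omega))
    simp only [O, this, h t (by omega)]

lemma O_succ (s t) : O s (t+1) = st (O s t) (s t) := rfl

lemma O_update {s : ℕ → ℕ × Bool} {n t c} (h : t ≤ n) : O (Function.update s n c) t = O s t :=
  O_congr fun u hu => by rw [Function.update_of_ne]; omega

lemma mem_F {R} {s : ℕ → ℕ × Bool} : ∀ {n : ℕ}, s ∈ F R n ↔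
    (∀ t < n, ok R t (O s t) (s t)) ∧ ∀ t, n ≤ t → s t = (0, false)
  | 0 => by
    simp [F, funext_iff]
  | n + 1 => by
    simp only [F, Finset.mem_biUnion, Finset.mem_image, mem_ch]
    constructor
    · rintro ⟨s', hs', c, hc, rfl⟩
      rw [mem_F] at hs'
      refine ⟨fun t ht => ?_, fun t ht => ?_⟩
      · rw [O_update (by omega)]
        rcases eq_or_ne t n with rfl | h
        · simpa using hc
        · rw [Function.update_of_ne h]; exact hs'.1 t (by omega)
      · rw [Function.update_of_ne (by omega)]; exact hs'.2 t (by omega)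
    · rintro ⟨h1, h2⟩
      refine ⟨Function.update s n (0, false), ?_, s n, ?_, ?_⟩
      · rw [mem_F]
        refine ⟨fun t ht => ?_, fun t ht => ?_⟩
        · rw [O_update (by omega), Function.update_of_ne (by omega)]; exact h1 t (by omega)
        · rcases eq_or_ne t n with rfl | h
          · simp
          · rw [Function.update_of_ne h]; exact h2 t (by omega)
      · rw [O_update le_rfl]; exact h1 n (by omega)
      · simp

lemma O_lt {R} {s : ℕ → ℕ × Bool} : ∀ {n : ℕ}, (∀ t < n, ok R t (O s t) (s t)) →
    ∀ x ∈ O s n, x < n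
  | 0, _, x, hx => by simp [O] at hx
  | n + 1, h, x, hx => by
    have ih := O_lt (n := n) (fun t ht => h t (by omega))
    have h2 := (h n (by omega)).1
    rw [O] at hx
    split_ifs at hx
    · have := ih x (Finset.mem_of_mem_erase hx); omega
    · rcases Finset.mem_insert.1 hx with rfl | hx
      · rcases h2 with h2 | h2
        · omega
        · have := ih _ h2; omega
      · have := ih x hx; omega

lemma sum_F {R} (n : ℕ) (g : ℕ → ℕ) :
    ∑ s ∈ F R (n+1), g (O s (n+1)).card =
      ∑ s ∈ F R n, ∑ c ∈ ch R n (O s n), g (st (O s n) c).card := by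
  classical
  rw [F, Finset.sum_biUnion]
  · refine Finset.sum_congr rfl fun s _ => ?_
    rw [Finset.sum_image]
    · refine Finset.sum_congr rfl fun c _ => ?_
      rw [O_succ, O_update le_rfl, Function.update_self]
    · intro c _ c' _ h
      simpa using congrFun h n
  · intro s hs s' hs' hne
    rw [Function.onFun, Finset.disjoint_left]
    rintro x hx hx'
    simp only [Finset.mem_image] at hx hx'
    obtain ⟨c, _, rfl⟩ := hx
    obtain ⟨c', _, h⟩ := hx'
    apply hne
    funext t
    rcases eq_or_ne t n with rfl | ht
    · rw [(mem_F.1 hs).2 t le_rfl, (mem_F.1 hs').2 t le_rfl]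
    · have := congrFun h t
      rw [Function.update_of_ne ht, Function.update_of_ne ht] at this
      exact this.symm

/-- generic transfer count -/
lemma count_F {R} (M : ℕ → ℕ → ℕ)
    (hM : ∀ k t o, (∀ x ∈ o, x < t) → ∑ c ∈ ch R t o, M k (st o c).card = M (k+1) o.card)
    (n k : ℕ) : ∑ s ∈ F R n, M k (O s n).card = M (n + k) 0 := by
  induction n generalizing k with
  | zero => simp [F, O]
  | succ n ih =>
    rw [sum_F, show n + 1 + k = n + (k+1) by omega, ← ih]
    exact Finset.sum_congr rfl fun s hs => hM _ _ _ (O_lt (mem_F.1 hs).1)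

lemma sum_ch {R t o} (ht : ∀ x ∈ o, x < t) (g : ℕ → ℕ) [DecidablePred fun l => ∀ x ∈ o, R l x] :
    ∑ c ∈ ch R t o, g (st o c).card =
      g (o.card + 1) + o.card * g o.card +
      ∑ l ∈ (insert t o).filter (fun l => ∀ x ∈ o, R l x), g (o.erase l).card := by
  classical
  have hto : t ∉ o := fun h => lt_irrefl _ (ht t h)
  have : ch R t o = ((insert t o).image fun l => (l, false)) ∪
      (((insert t o).filter (fun l => ∀ x ∈ o, R l x)).image fun l => (l, true)) := by
    ext ⟨l, b⟩
    cases b <;> simp [mem_ch, ok]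
  rw [this, Finset.sum_union, Finset.sum_image, Finset.sum_image, Finset.sum_insert hto]
  · congr 1
    congr 1
    · simp [st, hto]
    · rw [← smul_eq_mul, ← Finset.sum_const]
      refine Finset.sum_congr rfl fun l hl => ?_
      simp [st, hl]
  · intro x _ y _ h; simpa using h
  · intro x _ y _ h; simpa using h
  · rw [Finset.disjoint_left]; simp

def M : ℕ → ℕ → ℕ
  | 0, h => if h = 0 then 1 else 0
  | k+1, 0 => M k 1 + M k 0
  | k+1, h+1 => M k (h+2) + (h+1) * M k (h+1) + M k h

def N : ℕ → ℕ → ℕ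
  | 0, h => if h = 0 then 1 else 0
  | k+1, 0 => N k 1 + N k 0
  | k+1, h+1 => N k (h+2) + (h+2) * N k (h+1) + N k h

lemma hM (k t o) (ht : ∀ x ∈ o, x < t) :
    ∑ c ∈ ch (· ≤ ·) t o, M k (st o c).card = M (k+1) o.card := by
  classical
  rw [sum_ch ht]
  rcases o.eq_empty_or_nonempty with rfl | ho
  · simp [M]
  · have : (insert t o).filter (fun l => ∀ x ∈ o, l ≤ x) = {o.min' ho} := by
      ext l
      simp only [Finset.mem_filter, Finset.mem_insert, Finset.mem_singleton]
      constructor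
      · rintro ⟨rfl | h1, h2⟩
        · have := ht _ (o.min'_mem ho)
          have := h2 _ (o.min'_mem ho)
          omega
        · exact le_antisymm (h2 _ (o.min'_mem ho)) (o.min'_le _ h1)
      · rintro rfl
        exact ⟨Or.inr (o.min'_mem ho), fun x hx => o.min'_le _ hx⟩
    rw [this, Finset.sum_singleton, Finset.card_erase_of_mem (o.min'_mem ho)]
    obtain ⟨h, hh⟩ : ∃ h, o.card = h + 1 := ⟨o.card - 1, by have := ho.card_pos; omega⟩
    simp [hh, M]

lemma hN (k t o) (ht : ∀ x ∈ o, x < t) :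
    ∑ c ∈ ch (· ≥ ·) t o, N k (st o c).card = N (k+1) o.card := by
  classical
  rw [sum_ch ht]
  rcases o.eq_empty_or_nonempty with rfl | ho
  · simp [N]
  · have : (insert t o).filter (fun l => ∀ x ∈ o, l ≥ x) = {t, o.max' ho} := by
      ext l
      simp only [Finset.mem_filter, Finset.mem_insert, Finset.mem_singleton]
      constructor
      · rintro ⟨rfl | h1, h2⟩
        · simp
        · exact Or.inr (le_antisymm (o.le_max' _ h1) (h2 _ (o.max'_mem ho)))
      · rintro (rfl | rfl)
        · exact ⟨Or.inl rfl, fun x hx => (ht x hx).le⟩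
        · exact ⟨Or.inr (o.max'_mem ho), fun x hx => o.le_max' _ hx⟩
    have hne : t ≠ o.max' ho := (ht _ (o.max'_mem ho)).ne'
    have hto : t ∉ o := fun h => lt_irrefl _ (ht t h)
    rw [this, Finset.sum_pair hne, Finset.card_erase_of_mem (o.max'_mem ho),
      Finset.erase_eq_of_notMem hto]
    obtain ⟨h, hh⟩ : ∃ h, o.card = h + 1 := ⟨o.card - 1, by have := ho.card_pos; omega⟩
    simp only [hh, N, Nat.add_sub_cancel]
    ring

lemma card_words {R} (M : ℕ → ℕ → ℕ) (h0 : ∀ h, M 0 h = if h = 0 then 1 else 0)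
    (hM : ∀ k t o, (∀ x ∈ o, x < t) → ∑ c ∈ ch R t o, M k (st o c).card = M (k+1) o.card)
    (n : ℕ) : ((F R n).filter (fun s => O s n = ∅)).card = M n 0 := by
  have := count_F M hM n 0
  rw [add_zero] at this
  rw [← this, Finset.card_filter]
  simp [h0]

lemma M_succ (k h) : M (k+1) (h+1) = M k (h+2) + (h+1) * M k (h+1) + M k h := by rw [M]

/-- The algebra -/
lemma first_passage (n h : ℕ) : M (n+1) (h+1) =
    ∑ p ∈ Finset.HasAntidiagonal.antidiagonal n, N p.1 h * M p.2 0 := by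
  induction n generalizing h with
  | zero => cases h <;> simp [M, N]
  | succ n ih =>
    rw [Finset.Nat.sum_antidiagonal_succ]
    cases h with
    | zero =>
      rw [M_succ, ih, ih]
      simp only [N, add_mul, Finset.sum_add_distrib, if_true]
      ring
    | succ h =>
      rw [M_succ, ih, ih, ih]
      simp only [N, add_mul, Finset.sum_add_distrib, mul_assoc, ← Finset.mul_sum]
      simp
      ring
      

lemma algebra :
    (PowerSeries.mk fun n => (M n 0 : ℚ)) *
      (1 - PowerSeries.X - PowerSeries.X ^ 2 * PowerSeries.mk fun n => (N n 0 : ℚ)) = 1 := by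
  have h1 : (PowerSeries.mk fun n => (M n 0 : ℚ)) = 1 + PowerSeries.X *
     ((PowerSeries.mk fun n => (M n 0 : ℚ)) + PowerSeries.mk fun n => (M n 1 : ℚ)) := by
    ext n
    cases n with
    | zero => simp [M]
    | succ n =>
      rw [map_add, PowerSeries.coeff_succ_X_mul]
      simp [M, PowerSeries.coeff_one, add_comm]
  have h2 : (PowerSeries.mk fun n => (M n 1 : ℚ)) = PowerSeries.X *
     ((PowerSeries.mk fun n => (N n 0 : ℚ)) * PowerSeries.mk fun n => (M n 0 : ℚ)) := by
    ext n
    cases n with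
    | zero => simp [M]
    | succ n =>
      rw [PowerSeries.coeff_succ_X_mul, PowerSeries.coeff_mul]
      simp [first_passage n 0]
  rw [h2] at h1
  linear_combination h1

end SMP

namespace SMP

section part
variable {n : ℕ} (P : Finpartition (Finset.univ : Finset (Fin n)))

lemma part_ne (i : Fin n) : (P.part i).Nonempty := ⟨i, P.mem_part (Finset.mem_univ i)⟩

/-- least element of the block of `i` -/
noncomputable def lo (i : Fin n) : Fin n := (P.part i).min' (part_ne P i)
/-- greatest element of the block of `i` -/
noncomputable def hi (i : Fin n) : Fin n := (P.part i).max' (part_ne P i)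

lemma lo_le (i) : lo P i ≤ i := Finset.min'_le _ _ (P.mem_part (Finset.mem_univ i))
lemma le_hi (i) : i ≤ hi P i := Finset.le_max' _ _ (P.mem_part (Finset.mem_univ i))
lemma lo_mem (i) : lo P i ∈ P.part i := Finset.min'_mem _ _
lemma hi_mem (i) : hi P i ∈ P.part i := Finset.max'_mem _ _

lemma mem_iff (i j) : i ∈ P.part j ↔ P.part i = P.part j :=
  P.mem_part_iff_part_eq_part (Finset.mem_univ _) (Finset.mem_univ _)

lemma lo_congr {i j} (h : P.part i = P.part j) : lo P i = lo P j := by simp only [lo, h]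
lemma hi_congr {i j} (h : P.part i = P.part j) : hi P i = hi P j := by simp only [hi, h]

lemma lo_iff (i j) : lo P i = lo P j ↔ P.part i = P.part j := by
  refine ⟨fun h => ?_, lo_congr P⟩
  have h1 := (mem_iff P _ _).1 (lo_mem P i)
  have h2 := (mem_iff P _ _).1 (lo_mem P j)
  rw [← h1, ← h2, h]

lemma hi_iff (i j) : hi P i = hi P j ↔ P.part i = P.part j := by
  refine ⟨fun h => ?_, hi_congr P⟩
  have h1 := (mem_iff P _ _).1 (hi_mem P i)
  have h2 := (mem_iff P _ _).1 (hi_mem P j)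
  rw [← h1, ← h2, h]

lemma lo_lo (i) : lo P (lo P i) = lo P i := lo_congr P ((mem_iff P _ _).1 (lo_mem P i))
lemma lo_hi (i) : lo P (hi P i) = lo P i := lo_congr P ((mem_iff P _ _).1 (hi_mem P i))
lemma hi_hi (i) : hi P (hi P i) = hi P i := hi_congr P ((mem_iff P _ _).1 (hi_mem P i))

lemma lo_hi_iff (i j) : lo P i = lo P j ↔ hi P i = hi P j := by rw [lo_iff, hi_iff]

lemma part_min (i) : (P.part i).min = ((lo P i : Fin n) : WithTop (Fin n)) :=
  (Finset.coe_min' _).symm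
lemma part_max (i) : (P.part i).max = ((hi P i : Fin n) : WithBot (Fin n)) :=
  (Finset.coe_max' _).symm

/-- the word of a partition -/
noncomputable def word (t : ℕ) : ℕ × Bool :=
  if h : t < n then ((lo P ⟨t, h⟩ : ℕ), decide (hi P ⟨t, h⟩ = ⟨t, h⟩)) else (0, false)

lemma word_lt {t} (h : t < n) :
    word P t = ((lo P ⟨t, h⟩ : ℕ), decide (hi P ⟨t, h⟩ = ⟨t, h⟩)) := by simp [word, h]

lemma mem_O_word {t : ℕ} (ht : t ≤ n) (x : ℕ) :
    x ∈ O (word P) t ↔ ∃ i : Fin n, (lo P i : ℕ) = x ∧ x < t ∧ t ≤ hi P i := by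
  induction t generalizing x with
  | zero => simp [O]
  | succ t ih =>
    have htn : t < n := by omega
    rw [O, word_lt P htn]
    set k : Fin n := ⟨t, htn⟩ with hk
    have hkt : (k : ℕ) = t := rfl
    by_cases hf : hi P k = k
    · simp only [hf, decide_true, if_true, Finset.mem_erase]
      rw [ih (by omega)]
      constructor
      · rintro ⟨h1, i, h2, h3, h4⟩
        refine ⟨i, h2, by omega, ?_⟩
        by_contra h5
        have h6 : hi P i = hi P k := by rw [hf]; apply Fin.ext; omega
        rw [← lo_hi_iff] at h6
        rw [h6] at h2; omega
      · rintro ⟨i, h2, h3, h4⟩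
        have hne : lo P i ≠ lo P k := by
          intro h
          rw [lo_hi_iff, hf] at h
          rw [h] at h4; omega
        refine ⟨fun h => hne (Fin.ext (by omega)), i, h2, ?_, by omega⟩
        by_contra h5
        apply hne
        have : lo P i = k := Fin.ext (by omega)
        rw [← this, lo_lo]
    · have hlt : k < hi P k := lt_of_le_of_ne (le_hi P k) (Ne.symm hf)
      have hlt' : t < hi P k := hlt
      simp only [hf, decide_false, Bool.false_eq_true, if_false, Finset.mem_insert]
      rw [ih (by omega)]
      constructor
      · rintro (rfl | ⟨i, h2, h3, h4⟩)
        · have : (lo P k : ℕ) ≤ k := lo_le P k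
          exact ⟨k, rfl, by omega, by omega⟩
        · refine ⟨i, h2, by omega, ?_⟩
          by_contra h5
          have h6 : hi P i = k := Fin.ext (by omega)
          apply hf
          rw [← h6, hi_hi]
      · rintro ⟨i, h2, h3, h4⟩
        by_cases hxt : x = t
        · left
          have : lo P i = k := Fin.ext (by omega)
          rw [← h2, ← lo_lo, this]
        · right
          exact ⟨i, h2, by omega, by omega⟩

def Good (R : ℕ → ℕ → Prop) : Prop :=
  ∀ i j : Fin n, lo P j < hi P i → hi P i ≤ hi P j → R (lo P i) (lo P j)

lemma word_mem (R : ℕ → ℕ → Prop) : word P ∈ F R n ↔ Good P R := by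
  rw [mem_F]
  constructor
  · rintro ⟨h, -⟩ i j h1 h2
    have h3 := (h (hi P i) (hi P i).2).2
    rw [word_lt P (hi P i).2] at h3
    simp only [Fin.eta, hi_hi, decide_true, forall_const, lo_hi] at h3
    apply h3
    rw [mem_O_word P (hi P i).2.le]
    exact ⟨j, rfl, h1, h2⟩
  · intro h
    refine ⟨fun t ht => ⟨?_, ?_⟩, fun t ht => by simp [word, ht]⟩
    · rw [word_lt P ht, mem_O_word P ht.le]
      have h1 : (lo P ⟨t, ht⟩ : ℕ) ≤ t := lo_le P ⟨t, ht⟩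
      have h2 : t ≤ (hi P ⟨t, ht⟩ : ℕ) := le_hi P ⟨t, ht⟩
      by_cases h3 : (lo P ⟨t, ht⟩ : ℕ) = t
      · exact Or.inl h3
      · refine Or.inr ⟨⟨t, ht⟩, rfl, ?_, h2⟩
        show (lo P ⟨t, ht⟩ : ℕ) < t
        omega
    · rw [word_lt P ht]
      simp only [decide_eq_true_eq]
      intro h1 x hx
      rw [mem_O_word P ht.le] at hx
      obtain ⟨j, rfl, h2, h3⟩ := hx
      apply h
      · rw [h1]; exact h2
      · rw [h1]; exact h3

lemma O_word_n : O (word P) n = ∅ := by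
  ext x
  rw [mem_O_word P le_rfl]
  simp

end part

lemma word_inj {n : ℕ} : Function.Injective (word (n := n)) := by
  intro P Q h
  have hlo : ∀ i, lo P i = lo Q i := by
    intro i
    have := congrFun h i
    rw [word_lt P i.2, word_lt Q i.2] at this
    exact Fin.ext (congrArg Prod.fst this)
  have hp : ∀ i, P.part i = Q.part i := by
    intro i
    ext j
    rw [mem_iff, mem_iff, ← lo_iff, ← lo_iff, hlo, hlo]
  have key : ∀ P Q : Finpartition (Finset.univ : Finset (Fin n)), (∀ i, P.part i = Q.part i) →
      ∀ A ∈ P.parts, A ∈ Q.parts := by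
    intro P Q hp A hA
    obtain ⟨i, hi⟩ := P.nonempty_of_mem_parts hA
    rw [← P.part_eq_of_mem hA hi, hp]
    exact Q.part_mem.2 (Finset.mem_univ _)
  apply Finpartition.ext
  ext A
  exact ⟨key P Q hp A, key Q P (fun i => (hp i).symm) A⟩

lemma lab_le {R n} {s : ℕ → ℕ × Bool} (h : ∀ t < n, ok R t (O s t) (s t)) (t) (ht : t < n) :
    (s t).1 ≤ t := by
  rcases (h t ht).1 with h1 | h1
  · omega
  · exact (O_lt (fun u hu => h u (by omega)) _ h1).le

lemma mem_O {R n} {s : ℕ → ℕ × Bool} (h : ∀ t < n, ok R t (O s t) (s t)) {t} (ht : t ≤ n) (x) :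
    x ∈ O s t ↔ x < t ∧ (s x).1 = x ∧ ∀ u < t, (s u).1 = x → (s u).2 = false := by
  induction t generalizing x with
  | zero => simp [O]
  | succ t ih =>
    have ih := ih (by omega)
    have hok := (h t (by omega)).1
    have hle := lab_le h
    rw [O]
    cases hf : (s t).2
    · simp only [Bool.false_eq_true, if_false, Finset.mem_insert]
      constructor
      · rintro (rfl | hx)
        · rcases hok with h1 | h1
          · rw [h1]
            refine ⟨by omega, h1, fun u hu hut => ?_⟩
            rcases eq_or_ne u t with rfl | hne
            · exact hf
            · have := hle u (by omega); omega
          · obtain ⟨h2, h3, h4⟩ := (ih _).1 h1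
            refine ⟨by omega, h3, fun u hu hut => ?_⟩
            rcases eq_or_ne u t with rfl | hne
            · exact hf
            · exact h4 u (by omega) hut
        · obtain ⟨h2, h3, h4⟩ := (ih _).1 hx
          refine ⟨by omega, h3, fun u hu hut => ?_⟩
          rcases eq_or_ne u t with rfl | hne
          · exact hf
          · exact h4 u (by omega) hut
      · rintro ⟨h1, h2, h3⟩
        rcases eq_or_ne x t with rfl | hne
        · left; exact h2.symm
        · right; exact (ih _).2 ⟨by omega, h2, fun u hu => h3 u (by omega)⟩
    · simp only [if_true, Finset.mem_erase]
      rw [ih]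
      constructor
      · rintro ⟨h1, h2, h3, h4⟩
        refine ⟨by omega, h3, fun u hu hut => ?_⟩
        rcases eq_or_ne u t with rfl | hne
        · exact absurd hut.symm h1
        · exact h4 u (by omega) hut
      · rintro ⟨h1, h2, h3⟩
        have hx : x ≠ (s t).1 := by
          rintro rfl
          have := h3 t (by omega) rfl
          simp [hf] at this
        refine ⟨hx, ?_, h2, fun u hu => h3 u (by omega)⟩
        rcases eq_or_ne x t with rfl | hne
        · exact absurd h2.symm hx
        · omega

lemma word_surj {R n} {s : ℕ → ℕ × Bool} (hs : s ∈ F R n) (ho : O s n = ∅) :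
    ∃ P : Finpartition (Finset.univ : Finset (Fin n)), word P = s := by
  classical
  obtain ⟨h, h0⟩ := mem_F.1 hs
  have hle := lab_le h
  have hlab : ∀ t < n, (s (s t).1).1 = (s t).1 := by
    intro t ht
    rcases (h t ht).1 with h1 | h1
    · rw [h1, h1]
    · exact ((mem_O h ht.le _).1 h1).2.1
  have hflag : ∀ u v, u < v → v < n → (s u).2 = true → (s v).1 ≠ (s u).1 := by
    intro u v huv hv hu he
    rcases (h v hv).1 with h1 | h1
    · have := hle u (by omega); omega
    · have := ((mem_O h hv.le _).1 h1).2.2 u huv he.symm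
      simp [hu] at this
  have hex : ∀ t < n, ∃ u < n, (s u).1 = (s t).1 ∧ (s u).2 = true := by
    intro t ht
    by_contra hc
    push Not at hc
    have : (s t).1 ∈ O s n := by
      rw [mem_O h le_rfl]
      refine ⟨by have := hle t ht; omega, hlab t ht, fun u hu hut => ?_⟩
      simpa using hc u hu hut
    simp [ho] at this
  let P : Finpartition (Finset.univ : Finset (Fin n)) :=
    Finpartition.ofSetoid (Setoid.ker (fun i : Fin n => (s i).1))
  have hP : ∀ i j, j ∈ P.part i ↔ (s i).1 = (s j).1 := by
    intro i j
    rw [Finpartition.mem_part_ofSetoid_iff_rel]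
    rfl
  refine ⟨P, funext fun t => ?_⟩
  by_cases ht : t < n
  · rw [word_lt P ht]
    set k : Fin n := ⟨t, ht⟩
    have h1 : (lo P k : ℕ) = (s t).1 := by
      apply le_antisymm
      · have hl : (s t).1 < n := by have := hle t ht; omega
        have : (⟨(s t).1, hl⟩ : Fin n) ∈ P.part k := by
          rw [hP]; exact (hlab t ht).symm
        exact Finset.min'_le _ _ this
      · have := (hP _ _).1 (lo_mem P k)
        have h2 := hle (lo P k) (lo P k).2
        rw [← this] at h2
        exact h2
    have h2 : decide (hi P k = k) = (s t).2 := by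
      rw [Bool.eq_iff_iff, decide_eq_true_eq]
      obtain ⟨u, hu, hut, huf⟩ := hex t ht
      have hm : (⟨u, hu⟩ : Fin n) ∈ P.part k := by rw [hP]; exact hut.symm
      constructor
      · intro hk
        have h3 : (⟨u, hu⟩ : Fin n) ≤ hi P k := Finset.le_max' _ _ hm
        rw [hk] at h3
        have h3 : u ≤ t := h3
        rcases h3.eq_or_lt with rfl | h3
        · exact huf
        · exact absurd hut.symm (hflag u t h3 ht huf)
      · intro hf
        have h3 := (hP _ _).1 (hi_mem P k)
        have h4 : t ≤ (hi P k : ℕ) := le_hi P k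
        rcases h4.eq_or_lt with h4 | h4
        · exact Fin.ext h4.symm
        · exact absurd h3.symm (hflag t _ h4 (hi P k).2 hf)
    rw [h1, h2]
  · rw [h0 t (by omega)]; simp [word, ht]

lemma card_good (R : ℕ → ℕ → Prop) (n : ℕ) :
    Nat.card {P : Finpartition (Finset.univ : Finset (Fin n)) // Good P R} =
      ((F R n).filter (fun s => O s n = ∅)).card := by
  rw [← Nat.card_eq_finsetCard]
  refine Nat.card_congr (Equiv.ofBijective
    (fun P => ⟨word P.1, Finset.mem_filter.2 ⟨(word_mem P.1 R).2 P.2, O_word_n P.1⟩⟩) ⟨?_, ?_⟩)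
  · intro P Q hPQ
    exact Subtype.ext (word_inj (congrArg Subtype.val hPQ))
  · rintro ⟨s, hs⟩
    obtain ⟨h1, h2⟩ := Finset.mem_filter.1 hs
    obtain ⟨P, rfl⟩ := word_surj h1 h2
    exact ⟨⟨P, (word_mem P R).1 h1⟩, rfl⟩

lemma forall_parts {n : ℕ} (P : Finpartition (Finset.univ : Finset (Fin n)))
    (p : Finset (Fin n) → Prop) : (∀ A ∈ P.parts, p A) ↔ ∀ i, p (P.part i) := by
  constructor
  · intro h i; exact h _ (P.part_mem.2 (Finset.mem_univ _))
  · intro h A hA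
    obtain ⟨i, hi⟩ := P.nonempty_of_mem_parts hA
    rw [← P.part_eq_of_mem hA hi]; exact h i

lemma strong_iff {n : ℕ} (P : Finpartition (Finset.univ : Finset (Fin n))) :
    StronglyMonotonePartition P ↔ Good P (· ≤ ·) := by
  have h1 : StronglyMonotonePartition P ↔ ∀ i j, lo P i < lo P j → hi P i < hi P j := by
    unfold StronglyMonotonePartition
    rw [forall_parts]
    refine forall_congr' fun i => ?_
    rw [forall_parts]
    refine forall_congr' fun j => ?_
    rw [part_min, part_min, part_max, part_max, WithTop.coe_lt_coe, WithBot.coe_lt_coe]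
  rw [h1]
  constructor
  · intro h i j h2 h3
    by_contra hc
    exact absurd (h j i (by simpa using hc)) (not_lt.2 h3)
  · intro h i j h2
    by_contra hc
    have h4 := (lo_le P j).trans (le_hi P j)
    have := h j i (h2.trans_le h4) (not_lt.1 hc)
    exact absurd h2 (not_lt.2 this)

lemma non_iff {n : ℕ} (P : Finpartition (Finset.univ : Finset (Fin n))) :
    NonOverlappingPartition P ↔ Good P (· ≥ ·) := by
  have h1 : NonOverlappingPartition P ↔
      ∀ i j, ¬ (lo P i < lo P j ∧ lo P j < hi P i ∧ hi P i < hi P j) := by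
    unfold NonOverlappingPartition
    rw [forall_parts]
    refine forall_congr' fun i => ?_
    rw [forall_parts]
    refine forall_congr' fun j => ?_
    have e : (@LT.lt (WithTop (Fin n)) _ (P.part j).min (P.part i).max) ↔ lo P j < hi P i := by
      rw [part_min, part_max]
      exact WithTop.coe_lt_coe (a := hi P i) (b := lo P j)
    rw [e, part_min, part_min, part_max, part_max, WithTop.coe_lt_coe, WithBot.coe_lt_coe]
  rw [h1]
  constructor
  · intro h i j h2 h3
    by_contra hc
    have hc : lo P i < lo P j := by simpa using hc
    refine h i j ⟨hc, h2, lt_of_le_of_ne h3 fun he => ?_⟩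
    rw [← lo_hi_iff] at he
    exact absurd he hc.ne
  · rintro h i j ⟨h2, h3, h4⟩
    exact absurd h2 (not_lt.2 (h i j h3 h4.le))

lemma a_eq (n : ℕ) : a n = M n 0 := by
  rw [← card_words M (fun h => by rw [M]) hM n, ← card_good]
  exact Nat.card_congr (Equiv.subtypeEquivRight strong_iff)

lemma bessel_eq (n : ℕ) : bessel n = N n 0 := by
  rw [← card_words N (fun h => by rw [N]) hN n, ← card_good]
  exact Nat.card_congr (Equiv.subtypeEquivRight non_iff)

end SMP

open PowerSeries in
theorem stmt17 :
    (PowerSeries.mk fun n => (a n : ℚ)) *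
      (1 - PowerSeries.X - PowerSeries.X ^ 2 * PowerSeries.mk fun n => (bessel n : ℚ)) = 1 := by
  simp only [SMP.a_eq, SMP.bessel_eq]
  exact SMP.algebra
end
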